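/- arXiv:2602.08176 — 2 statements merged into one kernel-verified Lean document; each statement's English description precedes it below -/
import Mathlib

section
/- Let k₁, …, k_r ≥ 2 be integers and τ ∈ ℍ. For 0 ≤ i ≤ r define g_{k₁,…,k_i}(τ) := lim_{M→∞} lim_{N→∞} Σ_{λ₁ ≻ ⋯ ≻ λ_i ≻ 0, λ_j ∈ ℤ_Mτ + ℤ_N, Im(λ_j) > 0 for all j} λ₁^{−k₁}⋯λ_i^{−k_i}, with g_∅(τ) := 1. Then all the iterated limits defining G_{k₁,…,k_r}(τ) and the g_{k₁,…,k_i}(τ) exist (for each M the inner limit over N exists, and the resulting sequence converges as M → ∞), and G_{k₁,…,k_r}(τ) = Σ_{i=0}^{r} g_{k₁,…,k_i}(τ)·ζ(k_{i+1},…,k_r). -/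
/-!
As `Im τ > 0`, the lattice points `mτ + n ≻ 0` are those with `m > 0` together
with the positive integers, and the former all lie above the latter. Cutting each chain
`λ₁ ≻ ⋯ ≻ λ_r ≻ 0` at the place where it leaves the upper half plane gives, already at finite level,
`S_{M,N}(k₁,…,k_r) = ∑ᵢ g_{M,N}(k₁,…,kᵢ) ζ_N(kᵢ₊₁,…,k_r)` with truncated multiple zeta values `ζ_N`
(`SMN_succ`, from the deconcatenation formula `chainSum_split`). Everything then reduces to the
existence of the limits of `ζ_N` (`tendsto_chainSum_zetaValue`) and of `g_{M,N}`.

Cutting at the top row instead gives `g_{M+2,N}(k) = ∑ᵢ T_{M+1,N}(k₁,…,kᵢ) g_{M+1,N}(kᵢ₊₁,…,k_r)`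
(`gSMN_succ`), where `T_{m,N}` is the sum over chains in the row `mτ + n`, `|n| < N`. As all `kᵢ ≥ 2`
and `m ≥ 1`, the row sums converge absolutely as `N → ∞` (`tendsto_chainSum`), to `rowSum τ m`, which
yields the inner limit of `g_{M,N}` by induction on `M` (`tendsto_gSMN`) and the same recursion for
that limit `gInner`.

For the outer limit, the row sum of a nonempty word is `O(m^{-3/2})` (`exists_rowSum_bound`). Indeed
`∑ₙ |mτ+n|^{-2} = O(m^{-3/4})`, which settles words of length at least two; for one letter `k ≥ 3`
an extra factor `1/m` is available, and for `k = 2` subtracting the telescoping series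
`∑ₙ 1/((mτ+n)(mτ+n+1)) = 0` makes the terms of order three. By induction on the length of the word,
consecutive values of `gInner` therefore differ by `O(M^{-3/2})`, so that they form a Cauchy sequence
(`exists_tendsto_gInner`).
-/

open scoped Classical BigOperators

noncomputable section

/-- The underlying space of `𝔥¹ = ℚ⟨z₁, z₂, …⟩`: formal ℚ-linear combinations of words,
a word being encoded by the list of subscripts `[k₁, …, k_r]` of `z_{k₁} ⋯ z_{k_r}`. -/
abbrev H : Type := List ℕ →₀ ℚ

/-- The space of ℚ-linear combinations of words in the two letters `x` (= `false`)
and `y` (= `true`). -/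
abbrev Bw : Type := List Bool →₀ ℚ

/-- The word `z_{k₁} ⋯ z_{k_r}` as an element of `H`. -/
def zw (l : List ℕ) : H := Finsupp.single l 1

/-- Membership in `𝔥¹` (all subscripts ≥ 1). -/
def isH1 (w : H) : Prop := ∀ l ∈ w.support, ∀ k ∈ l, 1 ≤ k

/-- Membership in `𝔥^{≥2}` (all subscripts ≥ 2). -/
def isH2 (w : H) : Prop := ∀ l ∈ w.support, ∀ k ∈ l, 2 ≤ k

/-- Membership in `𝔥⁰` (first subscript ≥ 2, all others ≥ 1). -/
def isH0 (w : H) : Prop :=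
  ∀ l ∈ w.support, (∀ k ∈ l, 1 ≤ k) ∧ ∀ k, l.head? = some k → 2 ≤ k

/-- The harmonic product on words. -/
def hmulW : List ℕ → List ℕ → H
  | [], v => Finsupp.single v 1
  | k :: u, [] => Finsupp.single (k :: u) 1
  | k :: u, l :: v =>
      Finsupp.mapDomain (k :: ·) (hmulW u (l :: v)) +
      Finsupp.mapDomain (l :: ·) (hmulW (k :: u) v) +
      Finsupp.mapDomain ((k + l) :: ·) (hmulW u v)
  termination_by u v => u.length + v.length

/-- The harmonic product `*` on `𝔥¹`. -/
def hmul (u v : H) : H := u.sum fun a ca => v.sum fun b cb => (ca * cb) • hmulW a b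

/-- The shuffle product on words in the letters `x, y`. -/
def shW : List Bool → List Bool → Bw
  | [], v => Finsupp.single v 1
  | a :: u, [] => Finsupp.single (a :: u) 1
  | a :: u, b :: v =>
      Finsupp.mapDomain (a :: ·) (shW u (b :: v)) +
      Finsupp.mapDomain (b :: ·) (shW (a :: u) v)
  termination_by u v => u.length + v.length

/-- The identification `z_k = x^{k-1} y`. -/
def toXY (l : List ℕ) : List Bool :=
  (l.map fun k => List.replicate (k - 1) false ++ [true]).flatten

def fromXYAux : List Bool → ℕ → List ℕ
  | [], _ => []
  | false :: t, c => fromXYAux t (c + 1)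
  | true :: t, c => (c + 1) :: fromXYAux t 0

/-- Parse a word in `x, y` (ending in `y`) back into a word `z_{k₁} ⋯ z_{k_r}`. -/
def fromXY (l : List Bool) : List ℕ := fromXYAux l 0

def shmulW (a b : List ℕ) : H := Finsupp.mapDomain fromXY (shW (toXY a) (toXY b))

/-- The shuffle product `⧢` on `𝔥¹` (via the identification `z_k = x^{k-1}y`). -/
def shmul (u v : H) : H := u.sum fun a ca => v.sum fun b cb => (ca * cb) • shmulW a b

/-- `φ(w) = w * z₂ − w ⧢ z₂`. -/
def phi (w : H) : H := hmul w (zw [2]) - shmul w (zw [2])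

/-- `R(u,v) = φ(u*v) − φ(u)*v − u*φ(v)`. -/
def Rop (u v : H) : H := phi (hmul u v) - hmul (phi u) v - hmul u (phi v)

/-- The weight operator `W`. -/
def Wop (w : H) : H := w.sum fun a c => Finsupp.single a (c * (a.sum : ℚ))

/-- `Σ_{w = u'(p)u''} u' y u''`: replace one occurrence of the factor `p` by `y`. -/
def replaceOcc (p : List Bool) : List Bool → Bw
  | [] => 0
  | a :: t =>
      (if p.isPrefixOf (a :: t) then Finsupp.single (true :: (a :: t).drop p.length) 1 else 0) +
      Finsupp.mapDomain (a :: ·) (replaceOcc p t)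

/-- The map `δ` on words in the letters `x, y`. -/
def deltaB (l : List Bool) : Bw :=
  (if l.take 2 = [true, false] then (1/2 : ℚ) • Finsupp.single (l.drop 2) 1 else 0) -
  (if l.take 2 = [false, true] then (1/2 : ℚ) • Finsupp.single (l.drop 2) 1 else 0) +
  (if l.take 2 = [true, true] then (1/4 : ℚ) • Finsupp.single (l.drop 2) 1 else 0) +
  (1/2 : ℚ) • (replaceOcc [true, true, false] l - replaceOcc [false, true, true] l)

/-- The map `δ : 𝔥¹ → 𝔥¹`. -/
def deltaH (w : H) : H := w.sum fun a c => c • Finsupp.mapDomain fromXY (deltaB (toXY a))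

/-- The recursively defined map `𝔇` on tuples, with an explicit fuel parameter.
(The fuel `c.sum + 1` is always sufficient, since the total sum of the entries strictly
decreases in each recursive call.) -/
def Dfuel : ℕ → List ℕ → Bw
  | _, [] => Finsupp.single [] 1
  | 0, _ :: _ => 0
  | fuel + 1, k :: t =>
      let c := k :: t
      let n := c.length
      let ones : Finset ℕ := (Finset.Icc 1 n).filter fun i => c.getD (i - 1) 0 = 1
      let bigs : Finset ℕ := (Finset.Icc 1 n).filter fun i => 1 < c.getD (i - 1) 0
      let evenOdd : Finset ℕ → Prop := fun A =>
        ∀ i ∈ A, (Even i → i + 1 ∈ A) ∧ (Odd i → i - 1 ∈ A)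
      let oddEven : Finset ℕ → Prop := fun A =>
        ∀ i ∈ A, (Odd i → i + 1 ∈ A) ∧ (Even i → i - 1 ∈ A)
      let noEvenPair : Finset ℕ → Prop := fun B' =>
        ∀ l : ℕ, 1 ≤ l → ¬(2 * l ∈ B' ∧ 2 * l + 1 ∈ B')
      let noOddPair : Finset ℕ → Prop := fun B' =>
        ∀ l : ℕ, 1 ≤ l → ¬(2 * l - 1 ∈ B' ∧ 2 * l ∈ B')
      let newc : Finset ℕ → Finset ℕ → List ℕ := fun A B' =>
        (List.range n).filterMap fun j =>
          if j + 1 ∈ A then none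
          else some (c.getD j 0 - if j + 1 ∈ B' then 1 else 0)
      (∑ A ∈ ones.powerset.filter evenOdd,
        ∑ B' ∈ bigs.powerset.filter (fun B' => 1 ≤ A.card + B'.card ∧ noEvenPair B'),
          ((-1 : ℚ) ^ (B'.card + 1)) •
            Finsupp.mapDomain (fun w => List.replicate (A.card + B'.card) false ++ w)
              (Dfuel fuel (newc A B'))) +
      (∑ A ∈ ones.powerset.filter evenOdd,
        ∑ B' ∈ bigs.powerset.filter (fun B' => 2 ≤ A.card + B'.card ∧ noEvenPair B'),
          ((-1 : ℚ) ^ (B'.card + 1)) •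
            Finsupp.mapDomain
              (fun w => List.replicate (A.card + B'.card - 1) false ++ true :: w)
              (Dfuel fuel (newc A B'))) +
      (∑ A ∈ ones.powerset.filter oddEven,
        ∑ B' ∈ bigs.powerset.filter (fun B' => 2 ≤ A.card + B'.card ∧ noOddPair B'),
          ((-1 : ℚ) ^ B'.card) •
            Finsupp.mapDomain
              (fun w => List.replicate (A.card + B'.card - 1) false ++ true :: w)
              (Dfuel fuel (newc A B')))

/-- The map `𝔇` on tuples of positive integers. -/
def DropD (c : List ℕ) : Bw := Dfuel (c.sum + 1) c

/-- Run-length encoding of a word in `x, y`: the exponents `(c₁, …, c_{2s})` of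
`x^{c₁} y^{c₂} ⋯ x^{c_{2s-1}} y^{c_{2s}}`. -/
def rle : List Bool → List ℕ
  | [] => []
  | a :: t => ((t.takeWhile (· = a)).length + 1) :: rle (t.dropWhile (· = a))
  termination_by l => l.length
  decreasing_by
    simp only [List.length_cons]
    exact Nat.lt_succ_of_le (List.Sublist.length_le (List.dropWhile_sublist _))

def Drop1W (a : List ℕ) : H := Finsupp.mapDomain fromXY (DropD (rle (toXY a)))

/-- The Drop1 operator `𝒟 : 𝔥⁰ → 𝔥^{≥2}` of Hirose–Maesaka–Seki–Watanabe. -/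
def Drop1 (w : H) : H := w.sum fun a c => c • Drop1W a

/-- The map `der = −𝒟 ∘ φ`, i.e. `der(w) = 𝒟(w ⧢ z₂ − w * z₂)`. -/
def der (w : H) : H := Drop1 (shmul w (zw [2]) - hmul w (zw [2]))

/-- The ideal `DR_*` of `(𝔥^{≥2}, *)` spanned by the `der^n(R(u,v)) * w`. -/
def DRstar : Submodule ℚ H :=
  Submodule.span ℚ {x | ∃ (n : ℕ) (u v w : H), isH2 u ∧ isH2 v ∧ isH2 w ∧
    x = hmul (der^[n] (Rop u v)) w}

/-- The lexicographic order `≻` on the lattice `ℤτ + ℤ`. -/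
def lexGT (a b : ℤ × ℤ) : Prop := b.1 < a.1 ∨ (a.1 = b.1 ∧ b.2 < a.2)

/-- The lattice point `mτ + n`. -/
def lat (τ : ℂ) (p : ℤ × ℤ) : ℂ := p.1 * τ + p.2

/-- The finite partial sum `S_{M,N}(k₁,…,k_r; τ)` of the multiple Eisenstein series. -/
def SMN (k : List ℕ) (M N : ℕ) (τ : ℂ) : ℂ :=
  ∑ f ∈ (Fintype.piFinset fun _ : Fin k.length =>
      (Finset.Ioo (-(M : ℤ)) (M : ℤ)) ×ˢ (Finset.Ioo (-(N : ℤ)) (N : ℤ))).filter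
      (fun f => ∀ i : Fin k.length,
        lexGT (f i) (if h : (i : ℕ) + 1 < k.length then f ⟨(i : ℕ) + 1, h⟩ else (0, 0))),
    ∏ i : Fin k.length, (lat τ (f i)) ^ (-(k.get i : ℤ))

/-- The finite partial sums of the `g`-part: only lattice points with positive
imaginary part. -/
def gSMN (k : List ℕ) (M N : ℕ) (τ : ℂ) : ℂ :=
  ∑ f ∈ (Fintype.piFinset fun _ : Fin k.length =>
      (Finset.Ioo (-(M : ℤ)) (M : ℤ)) ×ˢ (Finset.Ioo (-(N : ℤ)) (N : ℤ))).filter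
      (fun f => (∀ i : Fin k.length,
        lexGT (f i) (if h : (i : ℕ) + 1 < k.length then f ⟨(i : ℕ) + 1, h⟩ else (0, 0))) ∧
        ∀ i : Fin k.length, 0 < (lat τ (f i)).im),
    ∏ i : Fin k.length, (lat τ (f i)) ^ (-(k.get i : ℤ))

/-- The multiple zeta value `ζ(k₁,…,k_r)` as an (unconditional) sum. -/
def zetaValue (k : List ℕ) : ℂ :=
  ∑' n : Fin k.length → ℕ,
    if ∀ i : Fin k.length,
        (if h : (i : ℕ) + 1 < k.length then n ⟨(i : ℕ) + 1, h⟩ else 0) < n i then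
      ∏ i : Fin k.length, (n i : ℂ) ^ (-(k.get i : ℤ))
    else 0

section Quasi

variable {R : Type*} [CommRing R] [Algebra ℚ R]

/-- `F_w(M) = Σ_{w = w₁⋯w_s} Σ_{M > m₁ > ⋯ > m_s > 0} f_{w₁}(m₁)⋯f_{w_s}(m_s)` on words. -/
def Fword (f : ℕ → H →ₗ[ℚ] R) (M : ℕ) (l : List ℕ) : R :=
  if l = [] then 1
  else ∑ c : Composition l.length,
    ∑ m ∈ (Fintype.piFinset fun _ : Fin c.length => Finset.Ioo 0 M).filter
        (fun m => StrictAnti m),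
      ∏ i : Fin c.length, f (m i) (zw ((l.splitWrtComposition c).getD (i : ℕ) []))

/-- The ℚ-linear extension of `Fword`. -/
def FL (f : ℕ → H →ₗ[ℚ] R) (M : ℕ) (w : H) : R := w.sum fun l c => c • Fword f M l

/-- `μ^{m₁,…,m_r} = 1/(r₁!⋯r_s!)` where `r₁,…,r_s` are the multiplicities of the
distinct values of `m`. -/
def muCoeff {s : ℕ} (m : Fin s → ℕ) : ℚ :=
  (∏ v ∈ Finset.image m Finset.univ,
    ((Finset.univ.filter fun i => m i = v).card.factorial : ℚ))⁻¹

/-- `coF(M)` on words: supported on powers of `z₁`. -/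
def coFword (a : ℕ → R) (M : ℕ) (l : List ℕ) : R :=
  if ∀ k ∈ l, k = 1 then
    (-1 : R) ^ l.length *
      ∑ m ∈ (Fintype.piFinset fun _ : Fin l.length => Finset.Ioo 0 M).filter
          (fun m => Antitone m),
        muCoeff m • ∏ i : Fin l.length, a (m i)
  else 0

/-- The ℚ-linear extension of `coFword`. -/
def coFL (a : ℕ → R) (M : ℕ) (w : H) : R := w.sum fun l c => c • coFword a M l

/-- `F^*(M)`: the deconcatenation convolution of `coF(M)` and `F(M)` on words. -/
def FstarWord (f : ℕ → H →ₗ[ℚ] R) (M : ℕ) (l : List ℕ) : R :=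
  ∑ i ∈ Finset.range (l.length + 1),
    coFword (fun m => f m (zw [1])) M (l.take i) * Fword f M (l.drop i)

/-- The ℚ-linear extension of `FstarWord`. -/
def FstarL (f : ℕ → H →ₗ[ℚ] R) (M : ℕ) (w : H) : R := w.sum fun l c => c • FstarWord f M l

end Quasi

/-- Parse a word `b_{k₁}b₀^{m₁} ⋯ b_{k_r}b₀^{m_r}` (a list over ℕ, with `0` playing the
role of `b₀`) into the list of pairs `(k₁,m₁), …, (k_r,m_r)`. -/
def toPairs : List ℕ → List (ℕ × ℕ)
  | [] => []
  | k :: t => (k, (t.takeWhile (· = 0)).length) :: toPairs (t.dropWhile (· = 0))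
  termination_by l => l.length
  decreasing_by
    simp only [List.length_cons]
    exact Nat.lt_succ_of_le (List.Sublist.length_le (List.dropWhile_sublist _))

def ofPairs (P : List (ℕ × ℕ)) : List ℕ :=
  (P.map fun p => p.1 :: List.replicate p.2 0).flatten

/-- The involution `τ_b` on words of `ℚ⟨ℬ⟩⁰`. -/
def taubW (l : List ℕ) : List ℕ :=
  ofPairs (((toPairs l).map fun p => (p.2 + 1, p.1 - 1)).reverse)

/-- The ℚ-linear involution `τ_b` on `ℚ⟨ℬ⟩⁰`. -/
def taub (w : H) : H := w.sum fun a c => c • (Finsupp.single (taubW a) 1 : H)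

/-- The balanced harmonic product `*_b` on words of `ℚ⟨ℬ⟩⁰`. -/
def hbW : List ℕ → List ℕ → H
  | [], v => Finsupp.single v 1
  | i :: u, [] => Finsupp.single (i :: u) 1
  | i :: u, j :: v =>
      Finsupp.mapDomain (i :: ·) (hbW u (j :: v)) +
      Finsupp.mapDomain (j :: ·) (hbW (i :: u) v) +
      (if i ≠ 0 ∧ j ≠ 0 then Finsupp.mapDomain ((i + j) :: ·) (hbW u v) else 0)
  termination_by u v => u.length + v.length

/-- The balanced harmonic product `*_b`. -/
def hb (u v : H) : H := u.sum fun a ca => v.sum fun b cb => (ca * cb) • hbW a b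

/-- The derivation `D` of `ℚ⟨ℬ⟩⁰`:
`D(b_{k₁}b₀^{m₁}⋯b_{k_r}b₀^{m_r}) = Σ_{1≤i≤j≤r} k_i(m_j+1)·(word with k_i, m_j increased)`. -/
def Dbal (w : H) : H :=
  w.sum fun a c =>
    let P := toPairs a
    ∑ i ∈ Finset.range P.length, ∑ j ∈ Finset.Ico i P.length,
      (c * (P.getD i (0, 0)).1 * ((P.getD j (0, 0)).2 + 1)) •
        (Finsupp.single (ofPairs (P.mapIdx fun t p =>
          ((if t = i then p.1 + 1 else p.1), (if t = j then p.2 + 1 else p.2)))) 1 : H)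

/-! ### Finite iterated sums over chains -/

/-- The finite iterated sum `∑ w k₁ p₁ ⋯ w k_r p_r` over the chains `p₁, …, p_r` of elements of `S`
with `R p_{j+1} p_j` for all `j`; the relation `R q p` is read as `q` lies below `p`. For transitive
`R` the recursion, which sums over the largest element first, yields exactly these chains. -/
def chainSum {α : Type*} (R : α → α → Prop) (w : ℕ → α → ℂ) : List ℕ → Finset α → ℂ
  | [], _ => 1
  | k :: ks, S => ∑ p ∈ S, w k p * chainSum R w ks (S.filter fun q => R q p)

lemma chainSum_map {α β : Type*} (e : α ↪ β) (R : β → β → Prop) (w : ℕ → β → ℂ) (ks : List ℕ) :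
    ∀ S : Finset α, chainSum R w ks (S.map e) =
      chainSum (fun a b => R (e a) (e b)) (fun k a => w k (e a)) ks S := by
  induction ks with
  | nil => intro S; rfl
  | cons k ks ih =>
    intro S
    simp only [chainSum, Finset.sum_map]
    refine Finset.sum_congr rfl fun p _ => ?_
    rw [Finset.filter_map, ih]
    rfl

lemma chainSum_empty {α : Type*} (R : α → α → Prop) (w : ℕ → α → ℂ) (ks : List ℕ) :
    chainSum R w ks ∅ = if ks = [] then 1 else 0 := by
  cases ks <;> simp [chainSum]

/-- Induction on the largest element `p` of a chain: if `p ∈ A`, everything below `p` is the part of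
`A` below `p` together with all of `B`; if `p ∈ B`, the rest of the chain lies in `B`. -/
lemma chainSum_union {α : Type*} (R : α → α → Prop) (w : ℕ → α → ℂ) (B : Finset α) (ks : List ℕ) :
    ∀ A : Finset α, (∀ a ∈ A, ∀ b ∈ B, R b a ∧ ¬ R a b) →
      chainSum R w ks (A ∪ B) = ∑ i ∈ Finset.range (ks.length + 1),
        chainSum R w (ks.take i) A * chainSum R w (ks.drop i) B := by
  induction ks with
  | nil => intro A _; simp [chainSum]
  | cons k ks ih =>
    intro A hAB
    have hd : Disjoint A B := by
      rw [Finset.disjoint_left]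
      intro a ha hb
      exact (hAB a ha a hb).2 (hAB a ha a hb).1
    rw [List.length_cons, Finset.sum_range_succ']
    simp only [List.take_succ_cons, List.drop_succ_cons, List.take_zero, List.drop_zero, chainSum,
      one_mul]
    rw [Finset.sum_union hd]
    congr 1
    · simp only [Finset.sum_mul]
      rw [Finset.sum_comm]
      refine Finset.sum_congr rfl fun p hp => ?_
      have h1 : (A ∪ B).filter (fun q => R q p) = A.filter (fun q => R q p) ∪ B := by
        rw [Finset.filter_union]
        congr 1
        exact Finset.filter_true_of_mem fun b hb => (hAB p hp b hb).1
      rw [h1, ih _ fun a ha b hb => hAB a (Finset.mem_filter.1 ha).1 b hb, Finset.mul_sum]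
      exact Finset.sum_congr rfl fun i _ => by ring
    · refine Finset.sum_congr rfl fun p hp => ?_
      congr 2
      rw [Finset.filter_union]
      rw [Finset.filter_false_of_mem (s := A) fun a ha => (hAB a ha p hp).2, Finset.empty_union]

/-- Deconcatenation: if `C` is the union of `A` and `B`, with `A` lying entirely above `B`, a chain
in `C` is a chain in `A` followed by a chain in `B`. -/
lemma chainSum_split {α : Type*} (R : α → α → Prop) (w : ℕ → α → ℂ) (ks : List ℕ)
    (A B C : Finset α) (hC : ∀ x, x ∈ C ↔ x ∈ A ∨ x ∈ B)
    (hAB : ∀ a ∈ A, ∀ b ∈ B, R b a ∧ ¬ R a b) :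
    chainSum R w ks C = ∑ i ∈ Finset.range (ks.length + 1),
      chainSum R w (ks.take i) A * chainSum R w (ks.drop i) B := by
  rw [← chainSum_union R w B ks A hAB]
  congr 1
  ext x
  rw [hC, Finset.mem_union]

/-- `chainSum` as a sum over tuples all of whose pairs of entries are compared by `R`. -/
lemma sum_strictChain_eq_chainSum {α : Type*} (R : α → α → Prop) (w : ℕ → α → ℂ) (ks : List ℕ) :
    ∀ S : Finset α, ∑ f ∈ (Fintype.piFinset fun _ : Fin ks.length => S).filter
        (fun f => ∀ i j, i < j → R (f j) (f i)), ∏ i : Fin ks.length, w (ks.get i) (f i) =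
      chainSum R w ks S := by
  induction ks with
  | nil =>
    intro S
    simp only [chainSum]
    rw [Finset.sum_eq_card_nsmul (b := 1) (fun a _ => Finset.prod_eq_one fun i _ => i.elim0)]
    have : (Fintype.piFinset fun _ : Fin ([] : List ℕ).length => S).filter
        (fun f => ∀ i j, i < j → R (f j) (f i)) = {fun i => i.elim0} := by
      ext f
      simp only [Finset.mem_filter, Fintype.mem_piFinset, Finset.mem_singleton]
      exact ⟨fun _ => funext fun i => i.elim0, fun _ => ⟨fun i => i.elim0, fun i => i.elim0⟩⟩
    rw [this]
    simp
  | cons k ks ih =>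
    intro S
    simp only [chainSum]
    simp only [← ih, Finset.mul_sum]
    rw [Finset.sum_sigma']
    refine Finset.sum_bij' (fun f _ => ⟨f 0, fun i => f i.succ⟩)
      (fun x _ => (Fin.cons x.1 x.2 : Fin (ks.length + 1) → α)) ?_ ?_ ?_ ?_ ?_
    · intro f hf
      simp only [Finset.mem_filter, Fintype.mem_piFinset, Finset.mem_sigma] at hf ⊢
      exact ⟨hf.1 0, fun i => ⟨hf.1 _, hf.2 _ _ (Fin.succ_pos i)⟩,
        fun i j hij => hf.2 _ _ (Fin.succ_lt_succ_iff.2 hij)⟩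
    · rintro ⟨p, g⟩ hx
      simp only [Finset.mem_filter, Fintype.mem_piFinset, Finset.mem_sigma] at hx ⊢
      obtain ⟨hp, hg, hc⟩ := hx
      refine ⟨fun i => ?_, fun i j hij => ?_⟩
      · refine Fin.cases ?_ (fun i => ?_) i
        · simpa using hp
        · simpa using (hg i).1
      · revert hij
        refine Fin.cases ?_ (fun j => ?_) j
        · intro h; exact absurd h (Fin.not_lt_zero i)
        · refine Fin.cases ?_ (fun i => ?_) i
          · intro _; simpa using (hg j).2
          · intro h; simpa using hc i j (Fin.succ_lt_succ_iff.1 h)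
    · intro f _
      exact Fin.cons_self_tail f
    · rintro ⟨p, g⟩ _
      rfl
    · intro f _
      exact Fin.prod_univ_succ (n := ks.length) _

/-- For transitive `R`, being decreasing at each step and ending above `b` is the same as being
decreasing and staying above `b`. -/
lemma chain_iff {α : Type*} (R : α → α → Prop) (hR : ∀ a b c, R a b → R b c → R a c) (b : α) :
    ∀ (n : ℕ) (f : Fin n → α),
      (∀ i : Fin n, R (if h : (i : ℕ) + 1 < n then f ⟨(i : ℕ) + 1, h⟩ else b) (f i)) ↔
        (∀ i j, i < j → R (f j) (f i)) ∧ ∀ i, R b (f i) := by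
  intro n f
  constructor
  · intro h
    have step : ∀ i (hi : i + 1 < n), R (f ⟨i + 1, hi⟩) (f ⟨i, by omega⟩) := by
      intro i hi
      have := h ⟨i, by omega⟩
      simpa [hi] using this
    have key : ∀ d i (hi : i + d + 1 < n), R (f ⟨i + d + 1, hi⟩) (f ⟨i, by omega⟩) := by
      intro d
      induction d with
      | zero => intro i hi; exact step i hi
      | succ d ih => intro i hi; exact hR _ _ _ (step (i + d + 1) hi) (ih i (by omega))
    have h1 : ∀ i j : Fin n, i < j → R (f j) (f i) := by
      intro i j hij
      have hij' : (i : ℕ) < j := hij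
      have := key (j - i - 1) i (by omega)
      have e : (⟨(i : ℕ) + (j - i - 1) + 1, by omega⟩ : Fin n) = j := by
        ext; simp only; omega
      rwa [e] at this
    refine ⟨h1, fun i => ?_⟩
    have hn : 0 < n := by have := i.2; omega
    have hl : R b (f ⟨n - 1, by omega⟩) := by
      have := h ⟨n - 1, by omega⟩
      rwa [dif_neg (by simp only; omega)] at this
    rcases lt_or_eq_of_le (show (i : ℕ) ≤ n - 1 by omega) with hlt | heq
    · exact hR _ _ _ hl (h1 i ⟨n - 1, by omega⟩ hlt)
    · have : i = ⟨n - 1, by omega⟩ := Fin.ext heq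
      rw [this]; exact hl
  · rintro ⟨h1, h2⟩ i
    split_ifs with h
    · exact h1 _ _ (by simp [Fin.lt_def])
    · exact h2 i

/-- The sum over tuples compared stepwise and bounded below by `b`, which is the shape of the
definitions of `SMN`, `gSMN` and `zetaValue`, as a `chainSum`. -/
lemma sum_chain_eq_chainSum {α : Type*} (R : α → α → Prop) (hR : ∀ a b c, R a b → R b c → R a c)
    (b : α) (P : α → Prop) (w : ℕ → α → ℂ) (ks : List ℕ) (S : Finset α) :
    ∑ f ∈ (Fintype.piFinset fun _ : Fin ks.length => S).filter
        (fun f => (∀ i : Fin ks.length,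
          R (if h : (i : ℕ) + 1 < ks.length then f ⟨(i : ℕ) + 1, h⟩ else b) (f i)) ∧
          ∀ i, P (f i)), ∏ i : Fin ks.length, w (ks.get i) (f i) =
      chainSum R w ks (S.filter fun a => R b a ∧ P a) := by
  rw [← sum_strictChain_eq_chainSum]
  refine Finset.sum_congr ?_ fun _ _ => rfl
  ext f
  simp only [Finset.mem_filter, Fintype.mem_piFinset, chain_iff R hR b]
  constructor
  · rintro ⟨h1, ⟨h2, h3⟩, h4⟩
    exact ⟨fun i => ⟨h1 i, h3 i, h4 i⟩, h2⟩
  · rintro ⟨h1, h2⟩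
    exact ⟨fun i => (h1 i).1, ⟨h2, fun i => (h1 i).2.1⟩, fun i => (h1 i).2.2⟩

/-! ### Absolutely convergent iterated sums over chains -/

/-- The infinite analogue of `chainSum`, over the chains of elements of a set `U`. -/
def chainTsum {α : Type*} (R : α → α → Prop) (w : ℕ → α → ℂ) : List ℕ → Set α → ℂ
  | [], _ => 1
  | k :: ks, U => ∑' p, if p ∈ U then w k p * chainTsum R w ks {q | q ∈ U ∧ R q p} else 0

/-- Forgetting the ordering bounds a chain sum by the product of the absolute single series. -/
lemma norm_chainSum_le {α : Type*} (R : α → α → Prop) (w : ℕ → α → ℂ) (ks : List ℕ)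
    (hw : ∀ k ∈ ks, Summable fun p => ‖w k p‖) :
    ∀ S : Finset α, ‖chainSum R w ks S‖ ≤ (ks.map fun k => ∑' p, ‖w k p‖).prod := by
  induction ks with
  | nil => intro S; simp [chainSum]
  | cons k ks ih =>
    intro S
    have ih := ih fun j hj => hw j (List.mem_cons_of_mem _ hj)
    have hk := hw k List.mem_cons_self
    have h0 : 0 ≤ (ks.map fun k => ∑' p, ‖w k p‖).prod := (norm_nonneg _).trans (ih ∅)
    simp only [chainSum, List.map_cons, List.prod_cons]
    calc _ ≤ ∑ p ∈ S, ‖w k p * chainSum R w ks (S.filter fun q => R q p)‖ := norm_sum_le _ _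
      _ ≤ ∑ p ∈ S, ‖w k p‖ * (ks.map fun k => ∑' p, ‖w k p‖).prod := by
        refine Finset.sum_le_sum fun p _ => ?_
        rw [norm_mul]
        exact mul_le_mul_of_nonneg_left (ih _) (norm_nonneg _)
      _ = (∑ p ∈ S, ‖w k p‖) * (ks.map fun k => ∑' p, ‖w k p‖).prod := by rw [Finset.sum_mul]
      _ ≤ _ := mul_le_mul_of_nonneg_right (hk.sum_le_tsum S fun _ _ => norm_nonneg _) h0

/-- If each single series converges absolutely, finite chain sums over an exhaustion converge, by
dominated convergence in the largest element. The set `U` is needed for the induction, where the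
remaining elements are confined to those below the largest one. -/
lemma tendsto_chainSum {α : Type*} (R : α → α → Prop) (w : ℕ → α → ℂ) (F : ℕ → Finset α)
    (hF : ∀ p, ∀ᶠ N in Filter.atTop, p ∈ F N) (ks : List ℕ)
    (hw : ∀ k ∈ ks, Summable fun p => ‖w k p‖) :
    ∀ U : Set α, Filter.Tendsto (fun N => chainSum R w ks ((F N).filter (· ∈ U))) Filter.atTop
      (nhds (chainTsum R w ks U)) := by
  induction ks with
  | nil => intro U; exact tendsto_const_nhds
  | cons k ks ih =>
    intro U
    have hw' : ∀ j ∈ ks, Summable fun p => ‖w j p‖ := fun j hj => hw j (List.mem_cons_of_mem _ hj)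
    have ih := ih hw'
    have hk := hw k List.mem_cons_self
    simp only [chainTsum]
    have e : ∀ N, chainSum R w (k :: ks) ((F N).filter (· ∈ U)) =
        ∑' p, if p ∈ F N ∧ p ∈ U then
          w k p * chainSum R w ks ((F N).filter (· ∈ {q | q ∈ U ∧ R q p})) else 0 := by
      intro N
      rw [tsum_eq_sum (s := (F N).filter (· ∈ U))]
      · simp only [chainSum]
        refine Finset.sum_congr rfl fun p hp => ?_
        rw [if_pos (Finset.mem_filter.1 hp), Finset.filter_filter]
        rfl
      · intro p hp
        rw [if_neg]
        simpa using hp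
    simp only [e]
    refine tendsto_tsum_of_dominated_convergence
      (bound := fun p => ‖w k p‖ * (ks.map fun k => ∑' p, ‖w k p‖).prod) (hk.mul_right _) ?_ ?_
    · intro p
      by_cases hp : p ∈ U
      · simp only [hp, and_true, if_true]
        refine ((ih {q | q ∈ U ∧ R q p}).const_mul (w k p)).congr' ?_
        filter_upwards [hF p] with N hN
        rw [if_pos hN]
        congr!
      · simp [hp]
    · refine Filter.Eventually.of_forall fun N p => ?_
      have h0 : 0 ≤ (ks.map fun k => ∑' p, ‖w k p‖).prod :=
        (norm_nonneg _).trans (norm_chainSum_le R w ks hw' ∅)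
      split_ifs
      · rw [norm_mul]
        exact mul_le_mul_of_nonneg_left (norm_chainSum_le R w ks hw' _) (norm_nonneg _)
      · rw [norm_zero]; positivity

/-! ### Multiple zeta values as limits of finite sums -/

/-- The defining series of `zetaValue` runs over tuples with indicator, so it is summed along the
exhausting cubes `{0, …, N - 1}^r`; absolute convergence follows from the bound by a product. -/
lemma tendsto_chainSum_zetaValue (ks : List ℕ) (hks : ∀ k ∈ ks, 2 ≤ k) :
    Filter.Tendsto (fun N => chainSum (fun a b : ℕ => a < b) (fun k n => (n : ℂ) ^ (-(k : ℤ))) ks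
      ((Finset.range N).filter (0 < ·))) Filter.atTop (nhds (zetaValue ks)) := by
  set t : (Fin ks.length → ℕ) → ℂ := fun n =>
    if ∀ i : Fin ks.length,
        (if h : (i : ℕ) + 1 < ks.length then n ⟨(i : ℕ) + 1, h⟩ else 0) < n i then
      ∏ i : Fin ks.length, (n i : ℂ) ^ (-(ks.get i : ℤ))
    else 0 with ht
  have hs1 : ∀ i : Fin ks.length, Summable fun n : ℕ => ‖(n : ℂ) ^ (-(ks.get i : ℤ))‖ := by
    intro i
    have h2 := hks _ (List.get_mem ks i)
    have := Real.summable_nat_pow_inv (p := ks.get i)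
    simpa using this.2 (by omega)
  have hmono : Monotone fun N : ℕ => Fintype.piFinset fun _ : Fin ks.length => Finset.range N := by
    intro a b hab
    exact Fintype.piFinset_subset _ _ fun _ => Finset.range_mono hab
  have hex : ∀ x : Fin ks.length → ℕ,
      ∃ N, x ∈ Fintype.piFinset fun _ : Fin ks.length => Finset.range N := by
    intro x
    refine ⟨∑ i, x i + 1, Fintype.mem_piFinset.2 fun i => Finset.mem_range.2 ?_⟩
    exact Nat.lt_succ_of_le (Finset.single_le_sum (fun _ _ => Nat.zero_le _) (Finset.mem_univ i))
  have hlim := Filter.tendsto_atTop_finset_of_monotone hmono hex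
  have hsum : Summable t := by
    refine Summable.of_norm (summable_of_sum_le
      (c := ∏ i : Fin ks.length, ∑' n : ℕ, ‖(n : ℂ) ^ (-(ks.get i : ℤ))‖)
      (fun _ => norm_nonneg _) fun u => ?_)
    obtain ⟨N, hN⟩ := (hlim.eventually (Filter.eventually_ge_atTop u)).exists
    calc ∑ x ∈ u, ‖t x‖
        ≤ ∑ x ∈ Fintype.piFinset fun _ : Fin ks.length => Finset.range N, ‖t x‖ :=
          Finset.sum_le_sum_of_subset_of_nonneg hN fun _ _ _ => norm_nonneg _
      _ ≤ ∑ x ∈ Fintype.piFinset fun _ : Fin ks.length => Finset.range N,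
            ∏ i : Fin ks.length, ‖(x i : ℂ) ^ (-(ks.get i : ℤ))‖ := by
          refine Finset.sum_le_sum fun x _ => ?_
          simp only [ht]
          split_ifs
          · rw [norm_prod]
          · rw [norm_zero]; exact Finset.prod_nonneg fun _ _ => norm_nonneg _
      _ = ∏ i : Fin ks.length, ∑ n ∈ Finset.range N, ‖(n : ℂ) ^ (-(ks.get i : ℤ))‖ :=
          Finset.sum_prod_piFinset (Finset.range N)
            fun (i : Fin ks.length) (n : ℕ) => ‖(n : ℂ) ^ (-(ks.get i : ℤ))‖
      _ ≤ _ := Finset.prod_le_prod (fun _ _ => Finset.sum_nonneg fun _ _ => norm_nonneg _)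
          fun i _ => (hs1 i).sum_le_tsum _ fun _ _ => norm_nonneg _
  refine (hsum.hasSum.comp hlim).congr fun N => ?_
  have := sum_chain_eq_chainSum (fun a b : ℕ => a < b) (fun a b c => lt_trans) 0 (fun _ => True)
    (fun k n => (n : ℂ) ^ (-(k : ℤ))) ks (Finset.range N)
  simp only [and_true, implies_true] at this
  refine Eq.trans ?_ (this.trans ?_)
  · rw [Finset.sum_filter]
    rfl
  · congr!

/-! ### Estimates for the sum over one row of the lattice -/

lemma norm_lat_ge (τ : ℂ) (m : ℕ) (n : ℤ) :
    m * τ.im ≤ ‖lat τ ((m : ℤ), n)‖ := by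
  have := Complex.abs_im_le_norm (lat τ ((m : ℤ), n))
  have e : (lat τ ((m : ℤ), n)).im = m * τ.im := by simp [lat]
  rw [e] at this
  exact (le_abs_self _).trans this

/-- The elementary inequality `max(m, |n|)^{-2} ≤ m^{-3/4} |n|^{-5/4}` gives a bound that is summable
over `n` and whose square is summable over `m`. -/
lemma exists_row_bound (τ : ℂ) (hτ : 0 < τ.im) : ∃ C : ℝ, 0 ≤ C ∧ ∀ m : ℕ, 1 ≤ m →
    (Summable fun n : ℤ => ‖lat τ ((m : ℤ), n)‖⁻¹ ^ 2) ∧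
      ∑' n : ℤ, ‖lat τ ((m : ℤ), n)‖⁻¹ ^ 2 ≤ C * (m : ℝ) ^ (-(3 / 4) : ℝ) := by
  set z : UpperHalfPlane := ⟨τ, hτ⟩ with hz
  set r := EisensteinSeries.r z with hr
  have hr0 : 0 < r := EisensteinSeries.r_pos z
  set b : ℤ → ℝ := fun n => |(n : ℝ)| ^ (-(5 / 4) : ℝ) + if n = 0 then 1 else 0 with hb
  have hbs : Summable b := by
    refine (Real.summable_abs_int_rpow (by norm_num)).add ?_
    exact summable_of_ne_finset_zero (s := {0}) fun n hn => by simpa using hn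
  have hb0 : ∀ n, 0 ≤ b n := fun n => by
    simp only [hb]; split_ifs <;> positivity
  have key : ∀ m : ℕ, 1 ≤ m → ∀ n : ℤ, ‖lat τ ((m : ℤ), n)‖⁻¹ ^ 2 ≤
      (r⁻¹ ^ 2 * (m : ℝ) ^ (-(3 / 4) : ℝ)) * b n := by
    intro m hm n
    have hm1 : (1 : ℝ) ≤ m := by exact_mod_cast hm
    have hm0 : (0 : ℝ) < m := by linarith
    have hx : (![(m : ℤ), n] : Fin 2 → ℤ) ≠ 0 := by
      intro h
      have := congrFun h 0
      simp at this
      omega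
    have h1 := EisensteinSeries.r_mul_max_le z hx
    simp only [Matrix.cons_val_zero, Matrix.cons_val_one] at h1
    set X := ‖(![(m : ℤ), n] : Fin 2 → ℤ)‖ with hX
    have hXm : (m : ℝ) ≤ X := by
      have := EisensteinSeries.abs_le_left_of_norm n (m : ℤ)
      simpa using this
    have hXn : |(n : ℝ)| ≤ X := by
      have := EisensteinSeries.abs_le_right_of_norm n (m : ℤ)
      simpa using this
    have hX0 : 0 < X := by linarith
    have h1' : r * X ≤ ‖lat τ ((m : ℤ), n)‖ := h1
    have h2 : ‖lat τ ((m : ℤ), n)‖⁻¹ ≤ r⁻¹ * X⁻¹ := by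
      rw [← mul_inv]
      exact inv_anti₀ (by positivity) h1'
    have h3 : X⁻¹ ^ 2 ≤ (m : ℝ) ^ (-(3 / 4) : ℝ) * b n := by
      have e : X⁻¹ ^ 2 = X ^ (-(3 / 4) : ℝ) * X ^ (-(5 / 4) : ℝ) := by
        rw [← Real.rpow_add hX0, inv_pow, ← Real.rpow_natCast, ← Real.rpow_neg hX0.le]
        norm_num
      rw [e]
      refine mul_le_mul (Real.rpow_le_rpow_of_nonpos hm0 hXm (by norm_num)) ?_ (by positivity)
        (by positivity)
      simp only [hb]
      split_ifs with hn
      · have : X ^ (-(5 / 4) : ℝ) ≤ 1 :=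
          Real.rpow_le_one_of_one_le_of_nonpos (by linarith) (by norm_num)
        have h5 : 0 ≤ |(n : ℝ)| ^ (-(5 / 4) : ℝ) := by positivity
        linarith
      · rw [add_zero]
        exact Real.rpow_le_rpow_of_nonpos (by positivity) hXn (by norm_num)
    calc ‖lat τ ((m : ℤ), n)‖⁻¹ ^ 2 ≤ (r⁻¹ * X⁻¹) ^ 2 := by gcongr
      _ = r⁻¹ ^ 2 * X⁻¹ ^ 2 := by ring
      _ ≤ r⁻¹ ^ 2 * ((m : ℝ) ^ (-(3 / 4) : ℝ) * b n) := by gcongr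
      _ = _ := by ring
  refine ⟨r⁻¹ ^ 2 * ∑' n, b n, mul_nonneg (by positivity) (tsum_nonneg hb0), fun m hm => ?_⟩
  have hs : Summable fun n : ℤ => ‖lat τ ((m : ℤ), n)‖⁻¹ ^ 2 :=
    Summable.of_nonneg_of_le (fun _ => by positivity) (key m hm) (hbs.mul_left _)
  refine ⟨hs, (hs.tsum_le_tsum (key m hm) (hbs.mul_left _)).trans_eq ?_⟩
  rw [tsum_mul_left]
  ring

/-- The telescoping series `∑ 1/((z+n)(z+n+1))` over `ℤ` vanishes. -/
lemma tsum_telescope (z : ℂ)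
    (hs : Summable fun n : ℤ => (z + n)⁻¹ - (z + n + 1)⁻¹) :
    ∑' n : ℤ, ((z + n)⁻¹ - (z + n + 1)⁻¹) = 0 := by
  have h := hs.hasSum.nat_add_neg_add_one.tendsto_sum_nat
  refine tendsto_nhds_unique h ?_
  -- The symmetric partial sum over `-N ≤ n < N` is `1/(z-N) - 1/(z+N)`; the coefficient `(1 : ℤ)`
  -- is there to match the Mathlib lemmas on the two limits.
  have e : ∀ N : ℕ, ∑ i ∈ Finset.range N, (((z + (i : ℤ))⁻¹ - (z + (i : ℤ) + 1)⁻¹) +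
      ((z + ((-(i + 1 : ℤ) : ℤ) : ℂ))⁻¹ - (z + ((-(i + 1 : ℤ) : ℤ) : ℂ) + 1)⁻¹)) =
      1 / (((1 : ℤ) : ℂ) * z - N) - 1 / (((1 : ℤ) : ℂ) * z + N) := by
    intro N
    induction N with
    | zero => simp
    | succ N ih =>
      rw [Finset.sum_range_succ, ih]
      have e1 : z + ((-(N + 1 : ℤ) : ℤ) : ℂ) + 1 = z - N := by push_cast; ring
      have e2 : z + ((-(N + 1 : ℤ) : ℤ) : ℂ) = z - (N + 1) := by push_cast; ring
      rw [e1, e2]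
      push_cast
      simp only [one_div, one_mul, ← add_assoc]
      ring
  have := (EisensteinSeries.tendsto_zero_inv_linear_sub z 1).sub
    (EisensteinSeries.tendsto_zero_inv_linear z 1)
  rw [sub_zero] at this
  exact this.congr fun N => (e N).symm

/-- The sum of `λ₁^{-k₁} ⋯ λ_r^{-k_r}` over all chains `λ₁ ≻ ⋯ ≻ λ_r` in the row `mτ + ℤ`
(a multitangent function evaluated at `mτ`). -/
def rowSum (τ : ℂ) (m : ℕ) (ks : List ℕ) : ℂ :=
  chainTsum (fun a b : ℤ => a < b) (fun k n => lat τ ((m : ℤ), n) ^ (-(k : ℤ))) ks Set.univ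

lemma norm_zpow_neg_natCast (x : ℂ) (k : ℕ) : ‖x ^ (-(k : ℤ))‖ = ‖x‖⁻¹ ^ k := by
  rw [zpow_neg, zpow_natCast, norm_inv, norm_pow, inv_pow]

lemma inv_norm_lat_le (τ : ℂ) (hτ : 0 < τ.im) (m : ℕ) (hm : 1 ≤ m) (n : ℤ) :
    ‖lat τ ((m : ℤ), n)‖⁻¹ ≤ (m : ℝ)⁻¹ * τ.im⁻¹ := by
  have hm0 : (0 : ℝ) < m := by exact_mod_cast hm
  rw [← mul_inv]
  exact inv_anti₀ (by positivity) (norm_lat_ge τ m n)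

lemma inv_norm_lat_le' (τ : ℂ) (hτ : 0 < τ.im) (m : ℕ) (hm : 1 ≤ m) (n : ℤ) :
    ‖lat τ ((m : ℤ), n)‖⁻¹ ≤ τ.im⁻¹ := by
  have hm1 : (1 : ℝ) ≤ m := by exact_mod_cast hm
  exact (inv_norm_lat_le τ hτ m hm n).trans
    (mul_le_of_le_one_left (by positivity) (inv_le_one_of_one_le₀ hm1))

lemma norm_lat_zpow_le (τ : ℂ) (hτ : 0 < τ.im) (m : ℕ) (hm : 1 ≤ m) (k : ℕ) (hk : 2 ≤ k) (n : ℤ) :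
    ‖lat τ ((m : ℤ), n) ^ (-(k : ℤ))‖ ≤ τ.im⁻¹ ^ (k - 2) * ‖lat τ ((m : ℤ), n)‖⁻¹ ^ 2 := by
  rw [norm_zpow_neg_natCast]
  obtain ⟨j, rfl⟩ := Nat.exists_eq_add_of_le' hk
  rw [pow_add, Nat.add_sub_cancel]
  exact mul_le_mul_of_nonneg_right
    (pow_le_pow_left₀ (by positivity) (inv_norm_lat_le' τ hτ m hm n) _) (by positivity)

lemma summable_row (τ : ℂ) (hτ : 0 < τ.im) (m : ℕ) (hm : 1 ≤ m) (k : ℕ) (hk : 2 ≤ k) :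
    Summable fun n : ℤ => ‖lat τ ((m : ℤ), n) ^ (-(k : ℤ))‖ := by
  obtain ⟨C, -, hC⟩ := exists_row_bound τ hτ
  exact Summable.of_nonneg_of_le (fun _ => norm_nonneg _) (norm_lat_zpow_le τ hτ m hm k hk)
    ((hC m hm).1.mul_left _)

/-- Each of the absolute series over the row `mτ + ℤ` contributes a factor `m^{-3/4}`. -/
lemma exists_prod_bound (τ : ℂ) (hτ : 0 < τ.im) (ks : List ℕ) (hks : ∀ k ∈ ks, 2 ≤ k) :
    ∃ E : ℝ, 0 ≤ E ∧ ∀ m : ℕ, 1 ≤ m →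
      (ks.map fun k : ℕ => ∑' n : ℤ, ‖lat τ ((m : ℤ), n) ^ (-(k : ℤ))‖).prod ≤
        E * ((m : ℝ) ^ (-(3 / 4) : ℝ)) ^ ks.length := by
  obtain ⟨C, hC0, hC⟩ := exists_row_bound τ hτ
  induction ks with
  | nil => exact ⟨1, zero_le_one, fun m _ => by simp⟩
  | cons k ks ih =>
    obtain ⟨E, hE0, hE⟩ := ih fun j hj => hks j (List.mem_cons_of_mem _ hj)
    have hk := hks k List.mem_cons_self
    refine ⟨τ.im⁻¹ ^ (k - 2) * C * E, by positivity, fun m hm => ?_⟩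
    rw [List.map_cons, List.prod_cons, List.length_cons]
    have h1 : ∑' n : ℤ, ‖lat τ ((m : ℤ), n) ^ (-(k : ℤ))‖ ≤
        τ.im⁻¹ ^ (k - 2) * (C * (m : ℝ) ^ (-(3 / 4) : ℝ)) := by
      refine ((summable_row τ hτ m hm k hk).tsum_le_tsum (norm_lat_zpow_le τ hτ m hm k hk)
        ((hC m hm).1.mul_left _)).trans ?_
      rw [tsum_mul_left]
      exact mul_le_mul_of_nonneg_left (hC m hm).2 (by positivity)
    calc _ ≤ (τ.im⁻¹ ^ (k - 2) * (C * (m : ℝ) ^ (-(3 / 4) : ℝ))) *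
          (E * ((m : ℝ) ^ (-(3 / 4) : ℝ)) ^ ks.length) :=
        mul_le_mul h1 (hE m hm) (List.prod_nonneg (by
          simp only [List.mem_map]
          rintro _ ⟨j, -, rfl⟩
          exact tsum_nonneg fun _ => norm_nonneg _)) (by positivity)
      _ = _ := by ring

/-- A series over the row `mτ + ℤ` whose terms are `O(m^{-1} |λ|^{-2})` is `O(m^{-7/4})`. -/
lemma norm_tsum_row_le (τ : ℂ) (C : ℝ) (m : ℕ)
    (h : Summable fun n : ℤ => ‖lat τ ((m : ℤ), n)‖⁻¹ ^ 2)
    (hC : ∑' n : ℤ, ‖lat τ ((m : ℤ), n)‖⁻¹ ^ 2 ≤ C * (m : ℝ) ^ (-(3 / 4) : ℝ))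
    (D : ℝ) (hD : 0 ≤ D) (v : ℤ → ℂ)
    (hv : ∀ n, ‖v n‖ ≤ D * (m : ℝ)⁻¹ * ‖lat τ ((m : ℤ), n)‖⁻¹ ^ 2) :
    Summable v ∧ ‖∑' n, v n‖ ≤ (D * C) * ((m : ℝ)⁻¹ * (m : ℝ) ^ (-(3 / 4) : ℝ)) := by
  have hs : Summable fun n => ‖v n‖ :=
    Summable.of_nonneg_of_le (fun _ => norm_nonneg _) hv (h.mul_left _)
  refine ⟨hs.of_norm, (norm_tsum_le_tsum_norm hs).trans
    ((hs.tsum_le_tsum hv (h.mul_left _)).trans ?_)⟩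
  rw [tsum_mul_left]
  calc _ ≤ D * (m : ℝ)⁻¹ * (C * (m : ℝ) ^ (-(3 / 4) : ℝ)) :=
        mul_le_mul_of_nonneg_left hC (by positivity)
    _ = _ := by ring

/-- The single series `∑ₙ (mτ+n)^{-k}`. For `k = 2`, where the terms are only `O(|λ|^{-2})`, the
vanishing telescoping series `∑ 1/((mτ+n)(mτ+n+1))` is subtracted first. -/
lemma exists_single_bound (τ : ℂ) (hτ : 0 < τ.im) (k : ℕ) (hk : 2 ≤ k) :
    ∃ D : ℝ, 0 ≤ D ∧ ∀ m : ℕ, 1 ≤ m → ‖∑' n : ℤ, lat τ ((m : ℤ), n) ^ (-(k : ℤ))‖ ≤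
      D * ((m : ℝ)⁻¹ * (m : ℝ) ^ (-(3 / 4) : ℝ)) := by
  obtain ⟨C, hC0, hC⟩ := exists_row_bound τ hτ
  rcases hk.eq_or_lt with rfl | hk3
  · refine ⟨τ.im⁻¹ * C, by positivity, fun m hm => ?_⟩
    have hm0 : (0 : ℝ) < m := by exact_mod_cast hm
    have hne : ∀ n : ℤ, lat τ ((m : ℤ), n) ≠ 0 := by
      intro n h
      have := norm_lat_ge τ m n
      rw [h, norm_zero] at this
      have : 0 < m * τ.im := by positivity
      linarith
    -- With `λ = mτ + n`, `1/λ² - 1/(λ(λ+1)) = 1/(λ²(λ+1))`, and `1/(λ(λ+1)) = 1/λ - 1/(λ+1)`.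
    set v : ℤ → ℂ := fun n => (lat τ ((m : ℤ), n))⁻¹ ^ 2 * (lat τ ((m : ℤ), n + 1))⁻¹ with hv
    have hvb : ∀ n, ‖v n‖ ≤ τ.im⁻¹ * (m : ℝ)⁻¹ * ‖lat τ ((m : ℤ), n)‖⁻¹ ^ 2 := by
      intro n
      simp only [hv, norm_mul, norm_pow, norm_inv]
      rw [mul_comm, mul_comm τ.im⁻¹]
      exact mul_le_mul_of_nonneg_right (inv_norm_lat_le τ hτ m hm _) (by positivity)
    obtain ⟨hvs, hvn⟩ := norm_tsum_row_le τ C m (hC m hm).1 (hC m hm).2 _ (by positivity) v hvb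
    have hlat : ∀ n : ℤ, lat τ ((m : ℤ), n + 1) = lat τ ((m : ℤ), n) + 1 := by
      intro n; simp [lat, add_assoc]
    have hdec : ∀ n : ℤ, ((m * τ + n)⁻¹ - (m * τ + n + 1)⁻¹) =
        lat τ ((m : ℤ), n) ^ (-((2 : ℕ) : ℤ)) - v n := by
      intro n
      have h1 := hne n
      have h2 := hne (n + 1)
      rw [hlat] at h2
      simp only [hv, hlat]
      have e : (m : ℂ) * τ + n = lat τ ((m : ℤ), n) := by simp [lat]
      rw [e, zpow_neg, zpow_natCast]
      field_simp
      ring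
    have hws := (summable_row τ hτ m hm 2 le_rfl).of_norm
    have hts : Summable fun n : ℤ => ((m * τ + n)⁻¹ - (m * τ + n + 1)⁻¹) := by
      simp only [hdec]; exact hws.sub hvs
    have h0 := tsum_telescope (m * τ) hts
    simp only [hdec] at h0
    rw [hws.tsum_sub hvs, sub_eq_zero] at h0
    rw [h0]
    exact hvn
  · refine ⟨τ.im⁻¹ ^ (k - 3) * τ.im⁻¹ * C, by positivity, fun m hm => ?_⟩
    refine (norm_tsum_row_le τ C m (hC m hm).1 (hC m hm).2 _ (by positivity) _ fun n => ?_).2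
    rw [norm_zpow_neg_natCast]
    obtain ⟨j, rfl⟩ := Nat.exists_eq_add_of_le' (show 3 ≤ k from hk3)
    have hm0 : (0 : ℝ) < m := by exact_mod_cast hm
    rw [Nat.add_sub_cancel]
    calc ‖lat τ ((m : ℤ), n)‖⁻¹ ^ (j + 3)
        = ‖lat τ ((m : ℤ), n)‖⁻¹ ^ j * ‖lat τ ((m : ℤ), n)‖⁻¹ * ‖lat τ ((m : ℤ), n)‖⁻¹ ^ 2 := by
          ring
      _ ≤ τ.im⁻¹ ^ j * ((m : ℝ)⁻¹ * τ.im⁻¹) * ‖lat τ ((m : ℤ), n)‖⁻¹ ^ 2 :=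
          mul_le_mul_of_nonneg_right (mul_le_mul
            (pow_le_pow_left₀ (by positivity) (inv_norm_lat_le' τ hτ m hm n) _)
            (inv_norm_lat_le τ hτ m hm n) (by positivity) (by positivity)) (by positivity)
      _ = _ := by ring

lemma norm_rowSum_le (τ : ℂ) (hτ : 0 < τ.im) (m : ℕ) (hm : 1 ≤ m) (ks : List ℕ)
    (hks : ∀ k ∈ ks, 2 ≤ k) :
    ‖rowSum τ m ks‖ ≤ (ks.map fun k : ℕ => ∑' n : ℤ, ‖lat τ ((m : ℤ), n) ^ (-(k : ℤ))‖).prod := by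
  have hw : ∀ k ∈ ks, Summable fun n : ℤ => ‖lat τ ((m : ℤ), n) ^ (-(k : ℤ))‖ :=
    fun k hk => summable_row τ hτ m hm k (hks k hk)
  refine le_of_tendsto (tendsto_chainSum (fun a b : ℤ => a < b)
    (fun k n => lat τ ((m : ℤ), n) ^ (-(k : ℤ))) (fun N : ℕ => Finset.Ioo (-(N : ℤ)) N)
    (fun p => ?_) ks hw Set.univ).norm
    (Filter.Eventually.of_forall fun N => norm_chainSum_le _ _ ks hw _)
  filter_upwards [Filter.eventually_gt_atTop p.natAbs] with N hN
  rw [Finset.mem_Ioo]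
  omega

/-- For length at least two, two factors `m^{-3/4}` from the absolute bound suffice; for length one
the cancellation in `exists_single_bound` is used. The exponent `3/2 > 1` makes the bound summable
over `m`. -/
lemma exists_rowSum_bound (τ : ℂ) (hτ : 0 < τ.im) (ks : List ℕ) (hks : ∀ k ∈ ks, 2 ≤ k)
    (hne : ks ≠ []) :
    ∃ E : ℝ, 0 ≤ E ∧ ∀ m : ℕ, 1 ≤ m → ‖rowSum τ m ks‖ ≤ E * (m : ℝ) ^ (-(3 / 2) : ℝ) := by
  have hsq : ∀ m : ℕ, 1 ≤ m →
      ((m : ℝ) ^ (-(3 / 4) : ℝ)) ^ 2 = (m : ℝ) ^ (-(3 / 2) : ℝ) := by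
    intro m _
    rw [← Real.rpow_natCast, ← Real.rpow_mul (by positivity)]
    norm_num
  match ks, hne with
  | [k], _ =>
    obtain ⟨D, hD0, hD⟩ := exists_single_bound τ hτ k (hks k List.mem_cons_self)
    refine ⟨D, hD0, fun m hm => ?_⟩
    have hm1 : (1 : ℝ) ≤ m := by exact_mod_cast hm
    have e : rowSum τ m [k] = ∑' n : ℤ, lat τ ((m : ℤ), n) ^ (-(k : ℤ)) := by
      simp [rowSum, chainTsum]
    rw [e, ← hsq m hm, pow_two]
    refine (hD m hm).trans ?_
    have : (m : ℝ)⁻¹ ≤ (m : ℝ) ^ (-(3 / 4) : ℝ) := by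
      rw [← Real.rpow_neg_one]
      exact Real.rpow_le_rpow_of_exponent_le hm1 (by norm_num)
    gcongr
  | k₁ :: k₂ :: ks, _ =>
    obtain ⟨E, hE0, hE⟩ := exists_prod_bound τ hτ _ hks
    refine ⟨E, hE0, fun m hm => ?_⟩
    have hm1 : (1 : ℝ) ≤ m := by exact_mod_cast hm
    refine (norm_rowSum_le τ hτ m hm _ hks).trans ((hE m hm).trans ?_)
    rw [← hsq m hm]
    refine mul_le_mul_of_nonneg_left (pow_le_pow_of_le_one (by positivity) ?_ ?_) hE0
    · exact Real.rpow_le_one_of_one_le_of_nonpos hm1 (by norm_num)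
    · simp

/-! ### Peeling off rows and passing to the limit -/

/-- The limit of `gSMN ks (M + 1) N τ` as `N → ∞`, computed by splitting off the top row `m = M` of
the lattice. The index is shifted because `gSMN` at `0` and at `1` both involve no lattice point. -/
def gInner (τ : ℂ) : ℕ → List ℕ → ℂ
  | 0, ks => if ks = [] then 1 else 0
  | M + 1, ks => ∑ i ∈ Finset.range (ks.length + 1),
      rowSum τ (M + 1) (ks.take i) * gInner τ M (ks.drop i)

lemma rowSum_nil (τ : ℂ) (m : ℕ) : rowSum τ m [] = 1 := rfl

/-- Induction on the length: the difference of consecutive terms is a sum of products of row sums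
of nonempty words with `gInner` of strictly shorter words; the latter are bounded because they
converge. -/
lemma exists_tendsto_gInner (τ : ℂ) (hτ : 0 < τ.im) : ∀ (r : ℕ) (ks : List ℕ), ks.length = r →
    (∀ k ∈ ks, 2 ≤ k) → ∃ g, Filter.Tendsto (fun M => gInner τ M ks) Filter.atTop (nhds g) := by
  intro r
  induction r using Nat.strong_induction_on with
  | _ r ih =>
  intro ks hr hks
  have hstep : ∀ i ∈ Finset.range ks.length, ∃ E : ℝ, ∀ M : ℕ,
      ‖rowSum τ (M + 1) (ks.take (i + 1)) * gInner τ M (ks.drop (i + 1))‖ ≤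
        E * ((M + 1 : ℕ) : ℝ) ^ (-(3 / 2) : ℝ) := by
    intro i hi
    rw [Finset.mem_range] at hi
    obtain ⟨E, hE0, hE⟩ := exists_rowSum_bound τ hτ (ks.take (i + 1))
      (fun k hk => hks k (List.mem_of_mem_take hk)) (by
        intro h
        have := congrArg List.length h
        rw [List.length_take, List.length_nil] at this
        omega)
    obtain ⟨g, hg⟩ := ih (ks.drop (i + 1)).length (by rw [List.length_drop]; omega) _ rfl
      fun k hk => hks k (List.mem_of_mem_drop hk)
    obtain ⟨B, hB⟩ := hg.norm.bddAbove_range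
    refine ⟨E * B, fun M => ?_⟩
    rw [norm_mul]
    have h1 := hE (M + 1) (by omega)
    have h2 : ‖gInner τ M (ks.drop (i + 1))‖ ≤ B := hB ⟨M, rfl⟩
    calc _ ≤ E * ((M + 1 : ℕ) : ℝ) ^ (-(3 / 2) : ℝ) * B :=
          mul_le_mul h1 h2 (norm_nonneg _) (by positivity)
      _ = _ := by ring
  choose! E hE using hstep
  have hdiff : ∀ M, dist (gInner τ M ks) (gInner τ (M + 1) ks) ≤
      (∑ i ∈ Finset.range ks.length, E i) * ((M + 1 : ℕ) : ℝ) ^ (-(3 / 2) : ℝ) := by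
    intro M
    rw [dist_comm, dist_eq_norm]
    simp only [gInner]
    rw [Finset.sum_range_succ']
    simp only [List.take_zero, List.drop_zero, rowSum_nil, one_mul, add_sub_cancel_right]
    rw [Finset.sum_mul]
    exact (norm_sum_le _ _).trans (Finset.sum_le_sum fun i hi => hE i hi M)
  have hs : Summable fun M : ℕ =>
      (∑ i ∈ Finset.range ks.length, E i) * ((M + 1 : ℕ) : ℝ) ^ (-(3 / 2) : ℝ) := by
    refine Summable.mul_left _ ((summable_nat_add_iff 1 (f := fun n : ℕ =>
      (n : ℝ) ^ (-(3 / 2) : ℝ))).2 ?_)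
    exact Real.summable_nat_rpow.2 (by norm_num)
  exact cauchySeq_tendsto_of_complete (cauchySeq_of_dist_le_of_summable _ hdiff hs)

/-- The order on lattice points, with the arguments in the order required by `chainSum`. -/
def below (a b : ℤ × ℤ) : Prop := lexGT b a

/-- The weight `λ^{-k}`. -/
def latWeight (τ : ℂ) (k : ℕ) (p : ℤ × ℤ) : ℂ := lat τ p ^ (-(k : ℤ))

/-- The lattice points `mτ + n` with `|m| < M` and `|n| < N`, as pairs `(m, n)`. -/
def rect (M N : ℕ) : Finset (ℤ × ℤ) :=
  (Finset.Ioo (-(M : ℤ)) (M : ℤ)) ×ˢ (Finset.Ioo (-(N : ℤ)) (N : ℤ))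

/-- The embedding of `ℤ` as the row of index `m` of the lattice. -/
def rowEmb (m : ℕ) : ℤ ↪ ℤ × ℤ := ⟨fun n => ((m : ℤ), n), fun _ _ h => (Prod.ext_iff.1 h).2⟩

/-- The embedding of `ℕ` in the row of index `0`. -/
def natEmb : ℕ ↪ ℤ × ℤ :=
  ⟨fun n => (0, (n : ℤ)), fun _ _ h => Int.ofNat_injective (Prod.ext_iff.1 h).2⟩

lemma rowEmb_apply (m : ℕ) (n : ℤ) : rowEmb m n = ((m : ℤ), n) := rfl

lemma natEmb_apply (n : ℕ) : natEmb n = (0, (n : ℤ)) := rfl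

lemma mem_rect (M N : ℕ) (p : ℤ × ℤ) :
    p ∈ rect M N ↔ (-(M : ℤ) < p.1 ∧ p.1 < M) ∧ (-(N : ℤ) < p.2 ∧ p.2 < N) := by
  simp only [rect, Finset.mem_product, Finset.mem_Ioo]

lemma mem_row (M N : ℕ) (p : ℤ × ℤ) : p ∈ (Finset.Ioo (-(N : ℤ)) N).map (rowEmb M) ↔
    p.1 = M ∧ -(N : ℤ) < p.2 ∧ p.2 < N := by
  rw [Finset.mem_map]
  constructor
  · rintro ⟨a, ha, rfl⟩
    exact ⟨rfl, Finset.mem_Ioo.1 ha⟩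
  · rintro ⟨h, h'⟩
    exact ⟨p.2, Finset.mem_Ioo.2 h', Prod.ext h.symm rfl⟩

lemma mem_nat (N : ℕ) (p : ℤ × ℤ) : p ∈ ((Finset.range N).filter (0 < ·)).map natEmb ↔
    p.1 = 0 ∧ 0 < p.2 ∧ p.2 < N := by
  simp only [Finset.mem_map, Finset.mem_filter, Finset.mem_range]
  constructor
  · rintro ⟨a, ha, rfl⟩
    rw [natEmb_apply]
    exact ⟨rfl, by omega, by omega⟩
  · rintro ⟨h, h'⟩
    refine ⟨p.2.toNat, by omega, Prod.ext h.symm ?_⟩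
    rw [natEmb_apply]
    omega

lemma below_trans (a b c : ℤ × ℤ) (h1 : below a b) (h2 : below b c) : below a c := by
  unfold below lexGT at *
  omega

lemma SMN_eq (ks : List ℕ) (M N : ℕ) (τ : ℂ) :
    SMN ks M N τ = chainSum below (latWeight τ) ks ((rect M N).filter fun p => below (0, 0) p) := by
  have := sum_chain_eq_chainSum below below_trans (0, 0) (fun _ => True) (latWeight τ) ks (rect M N)
  simp only [and_true, implies_true] at this
  rw [SMN]
  refine Eq.trans ?_ (this.trans ?_)
  · refine Finset.sum_congr ?_ fun _ _ => rfl
    ext f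
    rw [Finset.mem_filter, Finset.mem_filter]
    rfl
  · congr!

lemma gSMN_eq (ks : List ℕ) (M N : ℕ) (τ : ℂ) (hτ : 0 < τ.im) :
    gSMN ks M N τ = chainSum below (latWeight τ) ks ((rect M N).filter fun p => 0 < p.1) := by
  have := sum_chain_eq_chainSum below below_trans (0, 0) (fun p => 0 < (lat τ p).im)
    (latWeight τ) ks (rect M N)
  rw [gSMN]
  refine Eq.trans ?_ (this.trans ?_)
  · refine Finset.sum_congr ?_ fun _ _ => rfl
    ext f
    rw [Finset.mem_filter, Finset.mem_filter]
    rfl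
  · congr 1
    refine Finset.filter_congr fun p _ => ?_
    have e : (lat τ p).im = p.1 * τ.im := by simp [lat]
    rw [e, mul_pos_iff_of_pos_right hτ]
    simp only [below, lexGT]
    constructor
    · rintro ⟨-, h⟩
      exact_mod_cast h
    · intro h
      exact ⟨Or.inl h, by exact_mod_cast h⟩

lemma gSMN_trivial (ks : List ℕ) (M N : ℕ) (hM : M ≤ 1) (τ : ℂ) (hτ : 0 < τ.im) :
    gSMN ks M N τ = if ks = [] then 1 else 0 := by
  rw [gSMN_eq ks M N τ hτ, ← chainSum_empty below (latWeight τ)]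
  congr 1
  refine Finset.filter_false_of_mem fun p hp => ?_
  simp only [rect, Finset.mem_product, Finset.mem_Ioo] at hp
  omega

/-- Separating the row of index `M + 1` from the lower rows of positive index. -/
lemma gSMN_succ (ks : List ℕ) (M N : ℕ) (τ : ℂ) (hτ : 0 < τ.im) :
    gSMN ks (M + 2) N τ = ∑ i ∈ Finset.range (ks.length + 1),
      chainSum (fun a b : ℤ => a < b) (fun k n => lat τ (((M + 1 : ℕ) : ℤ), n) ^ (-(k : ℤ)))
        (ks.take i) (Finset.Ioo (-(N : ℤ)) N) * gSMN (ks.drop i) (M + 1) N τ := by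
  have hset : ∀ x, x ∈ ((rect (M + 2) N).filter fun p => 0 < p.1) ↔
      x ∈ (Finset.Ioo (-(N : ℤ)) N).map (rowEmb (M + 1)) ∨
        x ∈ ((rect (M + 1) N).filter fun p => 0 < p.1) := by
    rintro ⟨m, n⟩
    simp only [Finset.mem_filter, mem_rect, mem_row]
    omega
  rw [gSMN_eq _ _ _ _ hτ, chainSum_split _ _ _ _ _ _ hset]
  · refine Finset.sum_congr rfl fun i _ => ?_
    rw [gSMN_eq _ _ _ _ hτ, chainSum_map]
    congr 2
    funext a b
    simp [below, lexGT, rowEmb_apply]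
  · rintro ⟨a, a'⟩ ha ⟨b, b'⟩ hb
    simp only [Finset.mem_filter, mem_rect, mem_row] at ha hb
    simp only [below, lexGT]
    omega

/-- Separating the lattice points of positive imaginary part from the positive integers. -/
lemma SMN_succ (ks : List ℕ) (M N : ℕ) (τ : ℂ) (hτ : 0 < τ.im) :
    SMN ks (M + 1) N τ = ∑ i ∈ Finset.range (ks.length + 1), gSMN (ks.take i) (M + 1) N τ *
      chainSum (fun a b : ℕ => a < b) (fun k n => (n : ℂ) ^ (-(k : ℤ))) (ks.drop i)
        ((Finset.range N).filter (0 < ·)) := by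
  have hset : ∀ x, x ∈ ((rect (M + 1) N).filter fun p => below (0, 0) p) ↔
      x ∈ ((rect (M + 1) N).filter fun p => 0 < p.1) ∨
        x ∈ ((Finset.range N).filter (0 < ·)).map natEmb := by
    rintro ⟨m, n⟩
    simp only [Finset.mem_filter, mem_rect, mem_nat]
    simp only [below, lexGT]
    omega
  rw [SMN_eq, chainSum_split _ _ _ _ _ _ hset]
  · refine Finset.sum_congr rfl fun i _ => ?_
    rw [gSMN_eq _ _ _ _ hτ, chainSum_map]
    congr 2
    · funext a b
      simp [below, lexGT, natEmb_apply]
    · funext k n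
      simp [latWeight, lat, natEmb_apply]
  · rintro ⟨a, a'⟩ ha ⟨b, b'⟩ hb
    simp only [Finset.mem_filter, mem_rect, mem_nat] at ha hb
    simp only [below, lexGT]
    omega

lemma tendsto_gSMN (τ : ℂ) (hτ : 0 < τ.im) (M : ℕ) : ∀ ks : List ℕ, (∀ k ∈ ks, 2 ≤ k) →
    Filter.Tendsto (fun N => gSMN ks (M + 1) N τ) Filter.atTop (nhds (gInner τ M ks)) := by
  induction M with
  | zero =>
    intro ks _
    simp only [gSMN_trivial ks (0 + 1) _ le_rfl τ hτ, gInner]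
    exact tendsto_const_nhds
  | succ M ih =>
    intro ks hks
    simp only [gSMN_succ ks M _ τ hτ, gInner]
    refine tendsto_finsetSum _ fun i _ => Filter.Tendsto.mul ?_
      (ih _ fun k hk => hks k (List.mem_of_mem_drop hk))
    have := tendsto_chainSum (fun a b : ℤ => a < b)
      (fun k n => lat τ (((M + 1 : ℕ) : ℤ), n) ^ (-(k : ℤ)))
      (fun N : ℕ => Finset.Ioo (-(N : ℤ)) N) (fun p => by
        filter_upwards [Filter.eventually_gt_atTop p.natAbs] with N hN
        rw [Finset.mem_Ioo]
        omega) (ks.take i)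
      (fun k hk => summable_row τ hτ (M + 1) (by omega) k (hks k (List.mem_of_mem_take hk)))
      Set.univ
    rw [rowSum]
    simpa only [Set.mem_univ, Finset.filter_true] using this

/-- for `k₁,…,k_r ≥ 2` and `τ ∈ ℍ`, all the iterated limits defining
`G_{k₁,…,k_r}(τ)` and the `g_{k₁,…,k_i}(τ)` exist and
`G_{k₁,…,k_r}(τ) = Σ_{i=0}^{r} g_{k₁,…,k_i}(τ)·ζ(k_{i+1},…,k_r)`. -/
theorem stmt18 (l : List ℕ) (hl : ∀ k ∈ l, 2 ≤ k) (τ : ℂ) (hτ : 0 < τ.im) :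
    ∃ (GinnerM : ℕ → ℂ) (Gval : ℂ) (ginner : ℕ → ℕ → ℂ) (gval : ℕ → ℂ),
      (∀ M : ℕ, Filter.Tendsto (fun N => SMN l M N τ) Filter.atTop (nhds (GinnerM M))) ∧
      Filter.Tendsto GinnerM Filter.atTop (nhds Gval) ∧
      (∀ i ≤ l.length, ∀ M : ℕ,
        Filter.Tendsto (fun N => gSMN (l.take i) M N τ) Filter.atTop (nhds (ginner i M))) ∧
      (∀ i ≤ l.length, Filter.Tendsto (ginner i) Filter.atTop (nhds (gval i))) ∧
      Gval = ∑ i ∈ Finset.range (l.length + 1), gval i * zetaValue (l.drop i) := by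
  have htake : ∀ i, ∀ k ∈ l.take i, 2 ≤ k := fun i k hk => hl k (List.mem_of_mem_take hk)
  have hdrop : ∀ i, ∀ k ∈ l.drop i, 2 ≤ k := fun i k hk => hl k (List.mem_of_mem_drop hk)
  choose g hg using fun i => exists_tendsto_gInner τ hτ _ (l.take i) rfl (htake i)
  have hG : ∀ M, Filter.Tendsto (fun N => SMN l (M + 1) N τ) Filter.atTop
      (nhds (∑ i ∈ Finset.range (l.length + 1), gInner τ M (l.take i) * zetaValue (l.drop i))) := by
    intro M
    simp only [SMN_succ l M _ τ hτ]
    exact tendsto_finsetSum _ fun i _ =>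
      (tendsto_gSMN τ hτ M _ (htake i)).mul (tendsto_chainSum_zetaValue _ (hdrop i))
  -- For `M = 0` there are no lattice points at all, so the inner limit is taken separately.
  refine ⟨fun M => if M = 0 then (if l = [] then 1 else 0) else
      ∑ i ∈ Finset.range (l.length + 1), gInner τ (M - 1) (l.take i) * zetaValue (l.drop i),
    _, fun i M => gInner τ (M - 1) (l.take i), g, ?_, ?_, ?_, ?_, rfl⟩
  · intro M
    rcases M with _ | M
    · have : ∀ N, SMN l 0 N τ = if l = [] then 1 else 0 := by
        intro N
        rw [SMN_eq, ← chainSum_empty below (latWeight τ)]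
        congr 1
      simp only [this, if_true]
      exact tendsto_const_nhds
    · simpa using hG M
  · rw [← Filter.tendsto_add_atTop_iff_nat 1]
    simp only [Nat.add_eq_zero_iff, one_ne_zero, and_false, if_false, Nat.add_sub_cancel]
    exact tendsto_finsetSum _ fun i _ => (hg i).mul_const _
  · intro i _ M
    rcases M with _ | M
    · simp only [gSMN_trivial _ 0 _ zero_le_one τ hτ]
      exact tendsto_const_nhds
    · exact tendsto_gSMN τ hτ M _ (htake i)
  · intro i _
    rw [← Filter.tendsto_add_atTop_iff_nat 1]
    exact hg i
end
end

section
/- For every w ∈ 𝔥¹, viewed inside ℚ⟨ℬ⟩⁰ via the embedding z_k ↦ b_k, one has the identity D(w) − φ(w) = τ_b(τ_b(w) *_b τ_b(z₂)) − w * z₂ in ℚ⟨ℬ⟩⁰ (note τ_b(z₂) = b₁b₀). -/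
/-!
Everything is linear, so it suffices to treat a word `w = z_{k₁} ⋯ z_{k_r}`, and after cancelling
`w * z₂` the claim reads `D(w) + w ⧢ z₂ = τ_b(τ_b(w) *_b b₁b₀)`.  Here
`τ_b(w) = b₁b₀^{k_r-1} ⋯ b₁b₀^{k₁-1}` is the reversal of the word `w` written in `y = b₁`, `x = b₀`.
In the product `τ_b(w) *_b b₁b₀` the letter `b₁` of the second factor is either

* shuffled in: these terms form the ordinary shuffle product with `b₁b₀`, and on words in
  `b₀, b₁` the map `τ_b` reverses the word and reads it in the letters `z_k = x^{k-1}y`; reversal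
  being an automorphism of the shuffle product, they contribute `w ⧢ xy = w ⧢ z₂` (`map_taubW_shuffle`);
* or merged with the `i`-th letter `b₁` into a `b₂`; then `b₀` is inserted in one of the blocks of
  zeros to the right of it, a block of `k_j - 1` zeros offering `k_j` places.  Applying `τ_b` gives
  the terms of `D(w)` (`merged_uB`, `DP_eq_sum`).

The second part is compared through a recursion on the reversed word (`AP`, `DP`), with the pairs
`(k, m)` shifted to `(k - 1, m)`, which makes `τ_b` an involution on arbitrary lists of pairs.
-/

open scoped Classical BigOperators

noncomputable section

open Finsupp

/-! ### Words as lists of pairs -/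

/-- The word `b_{a₁+1}b₀^{m₁} ⋯ b_{a_r+1}b₀^{m_r}` attached to the pairs `(a_i, m_i)`. -/
def wd : List (ℕ × ℕ) → List ℕ
  | [] => []
  | p :: Q => (p.1 + 1) :: (List.replicate p.2 0 ++ wd Q)

/-- The involution `τ_b` in terms of the shifted pairs used in `wd`. -/
def swapRev (Q : List (ℕ × ℕ)) : List (ℕ × ℕ) := (Q.map Prod.swap).reverse

lemma swapRev_swapRev (Q : List (ℕ × ℕ)) : swapRev (swapRev Q) = Q := by
  simp [swapRev]

lemma swapRev_append (Q : List (ℕ × ℕ)) (a b : ℕ) :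
    swapRev (Q ++ [(a, b)]) = (b, a) :: swapRev Q := by
  simp [swapRev]

lemma wd_eq (Q : List (ℕ × ℕ)) : wd Q = ofPairs (Q.map fun p => (p.1 + 1, p.2)) := by
  induction Q with
  | nil => simp [wd, ofPairs]
  | cons p Q ih => simpa [wd, ofPairs] using ih

lemma takeWhile_wd (m : ℕ) (Q : List (ℕ × ℕ)) :
    (List.replicate m 0 ++ wd Q).takeWhile (· = 0) = List.replicate m 0 := by
  induction m with
  | zero => cases Q <;> simp [wd]
  | succ m ih => simpa [List.replicate_succ] using ih

lemma dropWhile_wd (m : ℕ) (Q : List (ℕ × ℕ)) :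
    (List.replicate m 0 ++ wd Q).dropWhile (· = 0) = wd Q := by
  induction m with
  | zero => cases Q <;> simp [wd]
  | succ m ih => simpa [List.replicate_succ] using ih

lemma toPairs_wd (Q : List (ℕ × ℕ)) : toPairs (wd Q) = Q.map fun p => (p.1 + 1, p.2) := by
  induction Q with
  | nil => simp [wd, toPairs]
  | cons p Q ih =>
    rw [wd, toPairs, takeWhile_wd, dropWhile_wd, ih]
    simp

lemma taubW_wd (Q : List (ℕ × ℕ)) : taubW (wd Q) = wd (swapRev Q) := by
  rw [taubW, toPairs_wd, wd_eq]
  simp [swapRev, Function.comp_def]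

lemma wd_zero (n : List ℕ) : wd (n.map fun a => (a, 0)) = n.map (· + 1) := by
  induction n with
  | nil => simp [wd]
  | cons a n ih => simpa [wd] using ih

/-! ### Words in `x, y` and reversal -/

/-- The letters `x, y` as the letters `b₀, b₁`, that is, as the subscripts `0, 1`. -/
def e (u : List Bool) : List ℕ := u.map fun b => if b then 1 else 0

lemma e_cons_false (u : List Bool) : e (false :: u) = 0 :: e u := by simp [e]
lemma e_cons_true (u : List Bool) : e (true :: u) = 1 :: e u := by simp [e]
lemma e_replicate (m : ℕ) (u : List Bool) :
    e (List.replicate m false ++ u) = List.replicate m 0 ++ e u := by simp [e]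

/-- The word `y x^{a₁} ⋯ y x^{a_r}`. -/
def uB : List ℕ → List Bool
  | [] => []
  | a :: L => true :: (List.replicate a false ++ uB L)

lemma uB_append (L L' : List ℕ) : uB (L ++ L') = uB L ++ uB L' := by
  induction L with
  | nil => simp [uB]
  | cons a L ih => simp [uB, ih]

lemma toXY_cons_succ (a : ℕ) (l : List ℕ) :
    toXY ((a + 1) :: l) = List.replicate a false ++ true :: toXY l := by
  simp [toXY]

lemma toXY_reverse (n : List ℕ) : (toXY (n.map (· + 1))).reverse = uB n.reverse := by
  induction n with
  | nil => simp [toXY, uB]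
  | cons a n ih =>
    rw [List.map_cons, toXY_cons_succ]
    simp [uB_append, ih, uB]

lemma e_uB (L : List ℕ) : e (uB L) = wd (L.map fun a => (0, a)) := by
  induction L with
  | nil => simp [uB, wd, e]
  | cons a L ih => rw [uB, e_cons_true, e_replicate, ih]; simp [wd]

lemma taubW_succ (n : List ℕ) : taubW (n.map (· + 1)) = e (uB n.reverse) := by
  rw [← wd_zero, taubW_wd, e_uB]
  simp [swapRev, Function.comp_def]

lemma taubW_e_uB (n : List ℕ) : taubW (e (uB n.reverse)) = n.map (· + 1) := by
  rw [e_uB, taubW_wd, ← wd_zero]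
  simp [swapRev, Function.comp_def]

lemma fromXYAux_replicate (a c : ℕ) (t : List Bool) :
    fromXYAux (List.replicate a false ++ true :: t) c = (c + a + 1) :: fromXYAux t 0 := by
  induction a generalizing c with
  | zero => simp [fromXYAux]
  | succ a ih =>
    rw [List.replicate_succ, List.cons_append, fromXYAux, ih]
    congr 1; omega

lemma fromXY_toXY (n : List ℕ) : fromXY (toXY (n.map (· + 1))) = n.map (· + 1) := by
  unfold fromXY
  induction n with
  | nil => simp [toXY, fromXYAux]
  | cons a n ih =>
    rw [List.map_cons, toXY_cons_succ, fromXYAux_replicate, ih]; simp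

lemma exists_toXY (t : List Bool) :
    ∃ a n, t ++ [true] = toXY ((a + 1) :: List.map (· + 1) n) := by
  induction t with
  | nil => exact ⟨0, [], by simp [toXY]⟩
  | cons b t ih =>
    obtain ⟨a, n, h⟩ := ih
    cases b with
    | false => exact ⟨a + 1, n, by
        rw [List.cons_append, h, toXY_cons_succ, toXY_cons_succ]; rfl⟩
    | true => exact ⟨0, a :: n, by rw [List.cons_append, h, List.map_cons, toXY_cons_succ 0]; rfl⟩

/-- On words in `b₀, b₁` (read as `x, y`) that start with `b₁`, the involution `τ_b` is reversal
followed by the identification `x^{k-1}y = z_k`. -/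
lemma taubW_e_reverse (t : List Bool) :
    taubW (e (t ++ [true]).reverse) = fromXY (t ++ [true]) := by
  obtain ⟨a, n, h⟩ := exists_toXY t
  have h' : t ++ [true] = toXY ((a :: n).map (· + 1)) := h
  rw [h', toXY_reverse, taubW_e_uB, fromXY_toXY]

lemma shW_nil_left (v : List Bool) : shW [] v = single v 1 := by rw [shW]
lemma shW_nil_right (u : List Bool) : shW u [] = single u 1 := by cases u <;> rw [shW]

lemma shW_cons (a b : Bool) (u v : List Bool) :
    shW (a :: u) (b :: v) =
      mapDomain (a :: ·) (shW u (b :: v)) + mapDomain (b :: ·) (shW (a :: u) v) := by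
  rw [shW]

/-- The recursion for the shuffle product with respect to last letters. -/
lemma shW_append (a b : Bool) (u v : List Bool) :
    shW (u ++ [a]) (v ++ [b]) =
      mapDomain (· ++ [a]) (shW u (v ++ [b])) + mapDomain (· ++ [b]) (shW (u ++ [a]) v) := by
  induction hn : u.length + v.length using Nat.strong_induction_on generalizing u v with
  | _ n ih =>
    subst hn
    cases u with
    | nil =>
      cases v with
      | nil =>
        simp only [List.nil_append, shW, mapDomain_single, List.cons_append]
        abel
      | cons d v =>
        have := ih _ (by simp) [] v rfl
        simp only [List.nil_append, List.cons_append] at this ⊢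
        rw [shW_cons, this, shW_cons]
        simp only [mapDomain_single, mapDomain_add, ← mapDomain_comp, shW_nil_left,
          Function.comp_def, List.cons_append]
        abel
    | cons c u =>
      cases v with
      | nil =>
        have := ih _ (by simp) u [] rfl
        simp only [List.nil_append, List.cons_append] at this ⊢
        rw [shW_cons, this, shW_cons]
        simp only [mapDomain_single, mapDomain_add, ← mapDomain_comp, shW_nil_right,
          Function.comp_def, List.cons_append]
        abel
      | cons d v =>
        have h1 := ih _ (by simp) u (d :: v) rfl
        have h2 := ih _ (by simp) (c :: u) v rfl
        simp only [List.cons_append] at h1 h2 ⊢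
        rw [shW_cons, h1, h2, shW_cons, shW_cons]
        simp only [mapDomain_add, ← mapDomain_comp, Function.comp_def, List.cons_append]
        abel

lemma shW_reverse (u v : List Bool) :
    shW u.reverse v.reverse = mapDomain List.reverse (shW u v) := by
  induction hn : u.length + v.length using Nat.strong_induction_on generalizing u v with
  | _ n ih =>
    subst hn
    cases u with
    | nil => simp [shW_nil_left]
    | cons a u =>
      cases v with
      | nil => simp [shW_nil_right]
      | cons b v =>
        have h1 := ih _ (by simp) u (b :: v) rfl
        have h2 := ih _ (by simp) (a :: u) v rfl
        simp only [List.reverse_cons] at h1 h2 ⊢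
        rw [shW_append, h1, h2, shW]
        simp only [mapDomain_add, ← mapDomain_comp, Function.comp_def, List.reverse_cons]

/-- The shuffle part of `τ_b(w) *_b b₁b₀` is sent by `τ_b` to `w ⧢ z₂`. -/
lemma map_taubW_shuffle (n : List ℕ) :
    mapDomain taubW (mapDomain e (shW (uB n.reverse) [true, false])) =
      shmulW (n.map (· + 1)) [2] := by
  have hv : [true, false] = [false, true].reverse := rfl
  have h2 : toXY [2] = [false] ++ [true] := rfl
  rw [← toXY_reverse, hv, shW_reverse, shmulW, h2, ← mapDomain_comp, ← mapDomain_comp]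
  -- every word of `w ⧢ xy` ends in `y`, so that `taubW_e_reverse` applies
  have key (f : Bw) : mapDomain ((taubW ∘ e) ∘ List.reverse) (mapDomain (· ++ [true]) f) =
      mapDomain fromXY (mapDomain (· ++ [true]) f) := by
    rw [← mapDomain_comp, ← mapDomain_comp]
    congr 1
    funext t
    exact taubW_e_reverse t
  rcases List.eq_nil_or_concat' (toXY (n.map (· + 1))) with h | ⟨t, b, h⟩
  · rw [h, shW_nil_left, shW_nil_left]
    have := key (single [false] 1)
    rwa [mapDomain_single, List.singleton_append] at this
  · have hb : b = true := by
      have h3 := toXY_reverse n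
      rw [h] at h3
      cases hn : n.reverse <;> simp_all [uB]
    subst hb
    rw [h]
    have h3 := shW_append true true t [false]
    rw [List.singleton_append] at h3 ⊢
    rw [h3, mapDomain_add, mapDomain_add, key, key]

/-! ### The product with `b₁b₀` -/

lemma hbW_nil_right (u : List ℕ) : hbW u [] = single u 1 := by cases u <;> rw [hbW]

lemma hbW_zero (u : List Bool) : hbW (e u) [0] = mapDomain e (shW u [false]) := by
  induction u with
  | nil => simp [e, hbW, shW]
  | cons b u ih =>
    have h (i : ℕ) : hbW (i :: e u) [0] =
        mapDomain (i :: ·) (hbW (e u) [0]) + mapDomain (0 :: ·) (single (i :: e u) 1) := by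
      rw [hbW, hbW_nil_right]; simp
    rw [shW, shW_nil_right]
    cases b <;>
    simp only [e_cons_true, e_cons_false, h, ih, mapDomain_add, ← mapDomain_comp,
      mapDomain_single, Function.comp_def]

/-- The terms of `u *_b b₁b₀` in which `b₁` is merged with a letter `b₁` of `u`. -/
def merged : List Bool → H
  | [] => 0
  | false :: u => mapDomain (0 :: ·) (merged u)
  | true :: u => mapDomain (1 :: ·) (merged u) + mapDomain (2 :: ·) (mapDomain e (shW u [false]))

lemma hbW_one_zero (u : List Bool) :
    hbW (e u) [1, 0] = mapDomain e (shW u [true, false]) + merged u := by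
  induction u with
  | nil => simp [e, hbW, shW, merged]
  | cons b u ih =>
    rw [shW]
    cases b
    · have h0 := hbW_zero (false :: u)
      rw [e_cons_false] at h0 ⊢
      rw [hbW, ih, h0, merged]
      simp only [mapDomain_add, ← mapDomain_comp, Function.comp_def, e_cons_true, e_cons_false]
      simp
      abel
    · have h0 := hbW_zero (true :: u)
      rw [e_cons_true] at h0 ⊢
      rw [hbW, ih, h0, hbW_zero, merged]
      simp only [mapDomain_add, ← mapDomain_comp, Function.comp_def, e_cons_true]
      simp
      abel

/-! ### The merged terms and `D` -/

/-- The pairs of the word whose shifted subscripts are the reversal of `L`. -/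
def pr (L : List ℕ) : List (ℕ × ℕ) := (L.map fun a => (a, 0)).reverse

/-- For the word `z_{k₁} ⋯ z_{k_r}` with `L = [k_r - 1, …, k₁ - 1]`, the sum over `i` of `k_i` times
the word with `k_i` increased by one, in shifted pairs. -/
def AP : List ℕ → (List (ℕ × ℕ) →₀ ℚ)
  | [] => 0
  | a :: L => mapDomain (· ++ [(a, 0)]) (AP L) + ((a : ℚ) + 1) • single (pr L ++ [(a + 1, 0)]) 1

/-- For the word `z_{k₁} ⋯ z_{k_r}` with `L = [k_r - 1, …, k₁ - 1]`, the element `D(w)` in shifted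
pairs. -/
def DP : List ℕ → (List (ℕ × ℕ) →₀ ℚ)
  | [] => 0
  | a :: L => mapDomain (· ++ [(a, 0)]) (DP L) + mapDomain (· ++ [(a, 1)]) (AP L) +
      ((a : ℚ) + 1) • single (pr L ++ [(a + 1, 1)]) 1

lemma shW_replicate (a : ℕ) (u : List Bool) :
    shW (List.replicate a false ++ u) [false] =
      (a : ℚ) • single (List.replicate (a + 1) false ++ u) 1 +
        mapDomain (List.replicate a false ++ ·) (shW u [false]) := by
  induction a with
  | zero => simp; exact (mapDomain_id (v := shW u [false])).symm
  | succ a ih =>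
    rw [List.replicate_succ, List.cons_append, shW, ih, shW_nil_right]
    simp only [mapDomain_add, ← mapDomain_comp, Function.comp_def, mapDomain_single,
      mapDomain_smul, List.replicate_succ, List.cons_append]
    push_cast
    module

lemma wd_swapRev_pr (L : List ℕ) : wd (swapRev (pr L)) = e (uB L) := by
  rw [e_uB]
  simp [swapRev, pr, Function.comp_def]

lemma wd_swapRev_append (Q : List (ℕ × ℕ)) (a b : ℕ) :
    wd (swapRev (Q ++ [(a, b)])) = (b + 1) :: (List.replicate a 0 ++ wd (swapRev Q)) := by
  rw [swapRev_append, wd]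

lemma shW_uB (L : List ℕ) :
    mapDomain e (shW (uB L) [false]) =
      single (0 :: e (uB L)) 1 + mapDomain (fun Q => wd (swapRev Q)) (AP L) := by
  induction L with
  | nil => simp [uB, AP, shW, e]
  | cons a L ih =>
    have h1 : mapDomain e (mapDomain (true :: ·)
        (mapDomain (List.replicate a false ++ ·) (shW (uB L) [false]))) =
        mapDomain (fun s => 1 :: (List.replicate a 0 ++ s))
          (mapDomain e (shW (uB L) [false])) := by
      simp only [← mapDomain_comp, Function.comp_def, e_cons_true, e_replicate]
    rw [uB, shW, shW_replicate, shW_nil_right, AP]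
    rw [mapDomain_add, mapDomain_add, mapDomain_add, h1, ih]
    simp only [mapDomain_add, ← mapDomain_comp, Function.comp_def, mapDomain_single,
      mapDomain_smul, wd_swapRev_append, wd_swapRev_pr, e_cons_true, e_cons_false, e_replicate,
      List.replicate_succ', List.append_assoc, List.singleton_append, zero_add]
    module

lemma merged_replicate (a : ℕ) (u : List Bool) :
    merged (List.replicate a false ++ u) = mapDomain (List.replicate a 0 ++ ·) (merged u) := by
  induction a with
  | zero => simp; exact (mapDomain_id (v := merged u)).symm
  | succ a ih =>
    rw [List.replicate_succ, List.cons_append, merged, ih, ← mapDomain_comp]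
    simp [Function.comp_def, List.replicate_succ]

/-- The merged part of `τ_b(w) *_b b₁b₀` is `τ_b(D(w))`. -/
lemma merged_uB (L : List ℕ) :
    merged (uB L) = mapDomain (fun Q => wd (swapRev Q)) (DP L) := by
  induction L with
  | nil => simp [uB, merged, DP]
  | cons a L ih =>
    have h1 : mapDomain e
        (mapDomain (List.replicate a false ++ ·) (shW (uB L) [false])) =
        mapDomain (List.replicate a 0 ++ ·) (mapDomain e (shW (uB L) [false])) := by
      simp only [← mapDomain_comp, Function.comp_def, e_replicate]
    rw [uB, merged, merged_replicate, ih, shW_replicate, mapDomain_add (f := e), h1, shW_uB, DP]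
    simp only [mapDomain_add, ← mapDomain_comp, Function.comp_def, mapDomain_single,
      mapDomain_smul, wd_swapRev_append, wd_swapRev_pr, e_replicate, e_cons_false,
      List.replicate_succ', List.append_assoc, List.singleton_append, zero_add,
      Nat.reduceAdd]
    module

lemma mapIdx_top (n : List ℕ) (d : ℕ → ℕ) (hd : ∀ t < n.length, d t = 0) :
    n.mapIdx (fun t a => (if t = n.length then a + 1 else a, d t)) = pr n.reverse := by
  apply List.ext_getElem
  · simp [pr]
  · intro t h1 h2
    have h3 : t < n.length := by simpa using h1
    simp [pr, hd t h3, h3.ne]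

lemma mapIdx_zero_top (n : List ℕ) (f : ℕ → ℕ → ℕ) :
    n.mapIdx (fun t a => (f t a, if t = n.length then 1 else 0)) =
      n.mapIdx (fun t a => (f t a, 0)) := by
  apply List.ext_getElem
  · simp
  · intro t h1 h2
    have h3 : t < n.length := by simpa using h1
    simp [h3.ne]

lemma AP_eq_sum (n : List ℕ) :
    ∑ i ∈ Finset.range n.length, ((n.getD i 0 : ℚ) + 1) •
      (single (n.mapIdx fun t a => (if t = i then a + 1 else a, 0)) 1 : List (ℕ × ℕ) →₀ ℚ) =
    AP n.reverse := by
  induction n using List.reverseRecOn with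
  | nil => simp [AP]
  | append_singleton n k ih =>
    rw [List.reverse_append, List.reverse_singleton, List.singleton_append, AP, ← ih]
    rw [List.length_append, List.length_singleton, Finset.sum_range_succ, mapDomain_finsetSum]
    congr 1
    · refine Finset.sum_congr rfl fun i hi => ?_
      have hi' : i < n.length := Finset.mem_range.1 hi
      rw [mapDomain_smul, mapDomain_single, List.getD_append _ _ _ _ hi', List.mapIdx_append]
      simp [hi'.ne']
    · rw [List.mapIdx_append, mapIdx_top n (fun _ => 0) (fun _ _ => rfl)]
      simp

lemma DP_eq_sum (n : List ℕ) :
    ∑ i ∈ Finset.range n.length, ∑ j ∈ Finset.Ico i n.length, ((n.getD i 0 : ℚ) + 1) •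
      (single (n.mapIdx fun t a => (if t = i then a + 1 else a, if t = j then 1 else 0)) 1 :
        List (ℕ × ℕ) →₀ ℚ) =
    DP n.reverse := by
  induction n using List.reverseRecOn with
  | nil => simp [DP]
  | append_singleton n k ih =>
    rw [List.reverse_append, List.reverse_singleton, List.singleton_append, DP, ← ih, ← AP_eq_sum]
    rw [List.length_append, List.length_singleton, Finset.sum_range_succ, mapDomain_finsetSum,
      mapDomain_finsetSum, ← Finset.sum_add_distrib]
    congr 1
    · refine Finset.sum_congr rfl fun i hi => ?_
      have hi' : i < n.length := Finset.mem_range.1 hi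
      rw [Finset.sum_Ico_succ_top hi'.le, mapDomain_finsetSum]
      congr 1
      · refine Finset.sum_congr rfl fun j hj => ?_
        have hj' : j < n.length := (Finset.mem_Ico.1 hj).2
        rw [mapDomain_smul, mapDomain_single, List.getD_append _ _ _ _ hi', List.mapIdx_append]
        simp [hi'.ne', hj'.ne']
      · rw [mapDomain_smul, mapDomain_single, List.getD_append _ _ _ _ hi', List.mapIdx_append,
          mapIdx_zero_top n (fun t a => if t = i then a + 1 else a)]
        simp [hi'.ne']
    · rw [Nat.Ico_succ_singleton, Finset.sum_singleton, List.mapIdx_append,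
        mapIdx_top n (fun t => if t = n.length then 1 else 0) (fun t ht => by simp [ht.ne])]
      simp

/-! ### The identity on words and its linear extension -/

lemma Dbal_single (n : List ℕ) (c : ℚ) :
    Dbal (single (n.map (· + 1)) c) = c • mapDomain wd (DP n.reverse) := by
  have hP : toPairs (n.map (· + 1)) = n.map fun a => (a + 1, 0) := by
    rw [← wd_zero, toPairs_wd]; simp [Function.comp_def]
  rw [Dbal, sum_single_index (by simp), hP, ← DP_eq_sum, mapDomain_finsetSum, Finset.smul_sum]
  simp only [List.length_map]
  refine Finset.sum_congr rfl fun i hi => ?_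
  rw [mapDomain_finsetSum, Finset.smul_sum]
  refine Finset.sum_congr rfl fun j hj => ?_
  have hi' : i < n.length := Finset.mem_range.1 hi
  have hj' : j < n.length := (Finset.mem_Ico.1 hj).2
  rw [mapDomain_smul, mapDomain_single, wd_eq, smul_smul]
  congr 1
  · simp [hi', hj']
  · congr 2
    apply List.ext_getElem
    · simp
    · intro t h1 h2
      simp only [List.getElem_mapIdx, List.getElem_map, Prod.mk.injEq, zero_add, and_true]
      split_ifs <;> rfl

lemma taub_eq (w : H) : taub w = mapDomain taubW w := by
  rw [taub, mapDomain]
  simp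

lemma taub_zw_two : taub (zw [2]) = zw [1, 0] := by
  have h : taubW [2] = [1, 0] := taubW_succ [1]
  rw [taub_eq, zw, mapDomain_single, h, zw]

lemma hb_zw (w : H) (b : List ℕ) : hb w (zw b) = w.sum fun a c => c • hbW a b := by
  simp [hb, zw]

lemma shmul_zw (w : H) (b : List ℕ) : shmul w (zw b) = w.sum fun a c => c • shmulW a b := by
  simp [shmul, zw]

lemma word_identity (n : List ℕ) :
    mapDomain wd (DP n.reverse) + shmulW (n.map (· + 1)) [2] =
      mapDomain taubW (hbW (taubW (n.map (· + 1))) [1, 0]) := by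
  rw [taubW_succ, hbW_one_zero, mapDomain_add, map_taubW_shuffle, merged_uB, ← mapDomain_comp,
    add_comm]
  congr 2
  funext Q
  simp [taubW_wd, swapRev_swapRev]

lemma Dbal_eq_sum (w : H) : Dbal w = w.sum fun a c => Dbal (single a c) := by
  conv_lhs => rw [Dbal]
  refine Finsupp.sum_congr fun a _ => ?_
  rw [Dbal, sum_single_index]
  simp

/-- for every `w ∈ 𝔥¹` (embedded in `ℚ⟨ℬ⟩⁰` via `z_k ↦ b_k`),
`D(w) − φ(w) = τ_b(τ_b(w) *_b τ_b(z₂)) − w * z₂`. -/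
theorem stmt19 (w : H) (hw : isH1 w) :
    Dbal w - phi w = taub (hb (taub w) (taub (zw [2]))) - hmul w (zw [2]) := by
  suffices h : Dbal w + shmul w (zw [2]) = taub (hb (taub w) (taub (zw [2]))) by
    rw [← h, phi]; abel
  have hR : taub (hb (taub w) (taub (zw [2]))) =
      w.sum fun a c => c • mapDomain taubW (hbW (taubW a) [1, 0]) := by
    rw [taub_zw_two, hb_zw, taub_eq w, sum_mapDomain_index (by simp) (by intros; rw [add_smul]),
      taub_eq, Finsupp.sum, mapDomain_finsetSum]
    simp only [mapDomain_smul]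
    rfl
  rw [hR, Dbal_eq_sum, shmul_zw, ← Finsupp.sum_add]
  refine Finsupp.sum_congr fun a ha => ?_
  obtain ⟨n, rfl⟩ : ∃ n : List ℕ, a = n.map (· + 1) := by
    refine ⟨a.map (· - 1), ?_⟩
    rw [List.map_map]
    refine (List.map_id a).symm.trans (List.map_congr_left fun k hk => ?_)
    have := hw a ha k hk
    simp; omega
  rw [Dbal_single, ← smul_add, word_identity]
end
end
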